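/- arXiv:2103.11102 — 6 statements merged into one kernel-verified Lean document; each statement's English description precedes it below -/
import Mathlib

section
/- Let d ≥ 1, δ > 0, and let f : ℝ^d → ℝ be Lipschitz continuous. Define the δ-smoothed version f̂_δ(x) = E_{u∼𝔹}[f(x + δu)], where 𝔹 is the uniform probability distribution on the closed unit Euclidean ball in ℝ^d. Then f̂_δ is differentiable at every x ∈ ℝ^d and its gradient satisfies ∇f̂_δ(x) = (d/δ)·E_{u∼𝕊}[f(x + δu)·u], where 𝕊 is the uniform probability distribution on the unit Euclidean sphere in ℝ^d. -/
/-!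
After translating and rescaling, the smoothed function is, up to a constant factor, the integral of
`g u = f (x + δ • u)` over the unit ball centred at `v = δ⁻¹ • (y - x)`, and the claim is about its
derivative in `v` at `0`. No derivative of `f` is needed, because all the dependence on `v` can be
put into the domain of integration. In polar coordinates about the origin, the ray in direction `θ`
leaves the ball centred at `v` at radius `ρ(θ, v) = ⟪θ, v⟫ + √(⟪θ, v⟫² + 1 - ‖v‖²)`, so that
`∫_{B(v, 1)} g = ∫_θ ∫_0^{ρ(θ, v)} r ^ (d - 1) * g (r • θ) dr dσ(θ)`
(`integral_closedBall_polar`). Since `ρ(θ, 0) = 1` and `ρ(θ, v) = 1 + ⟪θ, v⟫ + O(‖v‖²)`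
(`abs_exitRadius_sub_le`), the fundamental theorem of calculus gives the inner integral the gradient
`g θ • θ` at `v = 0`; differentiating under the integral sign yields `∫ g θ • θ dσ(θ)`
(`hasGradientAt_integral_closedBall`). The factor `d / δ` comes from `σ(S) = d * vol(B)` and the
scaling by `δ⁻¹`.
-/

open MeasureTheory

namespace OnePointGradient

open Metric Set

section

/-! ### The radius at which a ray leaves a translated ball -/

variable {E : Type*} [NormedAddCommGroup E] [InnerProductSpace ℝ E]

/-- The distance from the origin, along the ray spanned by the unit vector `θ`, at which that ray
leaves the closed unit ball centred at `v`; this is its meaning only for `‖v‖ < 1`. -/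
noncomputable def exitRadius (θ v : E) : ℝ :=
  inner ℝ θ v + √(inner ℝ θ v ^ 2 + (1 - ‖v‖ ^ 2))

lemma exitRadius_nonneg (θ : E) {v : E} (hv : ‖v‖ < 1) : 0 ≤ exitRadius θ v := by
  have h : |inner ℝ θ v| ≤ √(inner ℝ θ v ^ 2 + (1 - ‖v‖ ^ 2)) :=
    Real.abs_le_sqrt (by nlinarith [norm_nonneg v])
  rw [exitRadius]
  linarith [neg_abs_le (inner ℝ θ v)]

/-- The quadratic equation for the ray to meet the sphere `‖u - v‖ = 1` has, for `‖v‖ < 1`, one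
negative root and one positive root, the latter being the exit radius. -/
lemma smul_mem_closedBall_iff {θ v : E} (hθ : ‖θ‖ = 1) (hv : ‖v‖ < 1) {r : ℝ} (hr : 0 < r) :
    r • θ ∈ closedBall v 1 ↔ r ≤ exitRadius θ v := by
  have h1 : 0 < 1 - ‖v‖ ^ 2 := by nlinarith [norm_nonneg v]
  have hs := Real.sq_sqrt (show 0 ≤ inner ℝ θ v ^ 2 + (1 - ‖v‖ ^ 2) by positivity)
  have hs0 := Real.sqrt_nonneg (inner ℝ θ v ^ 2 + (1 - ‖v‖ ^ 2))
  have hn : ‖r • θ - v‖ ^ 2 = r ^ 2 - 2 * r * inner ℝ θ v + ‖v‖ ^ 2 := by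
    rw [norm_sub_sq_real, norm_smul, hθ, inner_smul_left]
    simp
    ring
  rw [mem_closedBall, dist_eq_norm, ← sq_le_one_iff₀ (norm_nonneg _), hn, exitRadius]
  set b := inner ℝ θ v
  set s := √(b ^ 2 + (1 - ‖v‖ ^ 2))
  have hsb : |b| < s := by
    apply abs_lt_of_sq_lt_sq <;> nlinarith
  have hb := abs_lt.1 hsb
  constructor
  · intro h
    by_contra! hc
    nlinarith
  · intro h
    nlinarith

/-- The exit radius is `1 + ⟪θ, v⟫` up to second order in `v`, uniformly in `θ`: the square root
lies between `1 - ‖v‖ ^ 2` and `1`. -/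
lemma abs_exitRadius_sub_le {θ v : E} (hθ : ‖θ‖ = 1) (hv : ‖v‖ < 1) :
    |exitRadius θ v - (1 + inner ℝ θ v)| ≤ ‖v‖ ^ 2 := by
  have hi : inner ℝ θ v ^ 2 ≤ ‖v‖ ^ 2 := by
    rw [sq_le_sq, abs_norm]
    simpa [hθ] using abs_real_inner_le_norm θ v
  have h1 : 0 < 1 - ‖v‖ ^ 2 := by nlinarith [norm_nonneg v]
  have hs := Real.sq_sqrt (show 0 ≤ inner ℝ θ v ^ 2 + (1 - ‖v‖ ^ 2) by positivity)
  have hs0 := Real.sqrt_nonneg (inner ℝ θ v ^ 2 + (1 - ‖v‖ ^ 2))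
  rw [exitRadius]
  set b := inner ℝ θ v
  set s := √(b ^ 2 + (1 - ‖v‖ ^ 2))
  rw [abs_le]
  constructor
  · nlinarith [sq_nonneg b]
  · nlinarith

@[simp] lemma exitRadius_zero (θ : E) : exitRadius θ 0 = 1 := by simp [exitRadius]

lemma abs_exitRadius_sub_one_le {θ v : E} (hθ : ‖θ‖ = 1) (hv : ‖v‖ < 1) :
    |exitRadius θ v - 1| ≤ 2 * ‖v‖ := by
  have h := abs_exitRadius_sub_le hθ hv
  have hi : |inner ℝ θ v| ≤ ‖v‖ := by simpa [hθ] using abs_real_inner_le_norm θ v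
  have := norm_nonneg v
  rw [abs_le] at *
  constructor <;> nlinarith

lemma hasFDerivAt_exitRadius {θ : E} (hθ : ‖θ‖ = 1) :
    HasFDerivAt (exitRadius θ) (innerSL ℝ θ) 0 := by
  have h1 : HasFDerivAt (fun v => exitRadius θ v - (1 + inner ℝ θ v)) (0 : E →L[ℝ] ℝ) 0 := by
    refine Asymptotics.IsBigO.hasFDerivAt (n := 2) ?_ (by norm_num)
    refine Asymptotics.IsBigO.of_bound 1 ?_
    filter_upwards [ball_mem_nhds (0 : E) one_pos] with v hv
    simpa using abs_exitRadius_sub_le hθ (by simpa using hv)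
  have h2 : HasFDerivAt (fun v : E => 1 + innerSL ℝ θ v) (innerSL ℝ θ) 0 :=
    ((innerSL ℝ θ).hasFDerivAt (x := 0)).const_add 1
  have h3 := h1.add h2
  rw [zero_add] at h3
  refine h3.congr_of_eventuallyEq (Filter.Eventually.of_forall fun v => ?_)
  simp

/-! ### Integrals over balls in polar coordinates -/

variable [Nontrivial E] [FiniteDimensional ℝ E] [MeasurableSpace E] [BorelSpace E]
  (μ : Measure E) [μ.IsAddHaarMeasure]

/-- Polar coordinates for an integrable function that need not be radial. -/
lemma integral_polar {h : E → ℝ} (hh : Integrable h μ) :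
    Integrable (fun θ : sphere (0 : E) 1 =>
        ∫ r in Ioi (0 : ℝ), r ^ (Module.finrank ℝ E - 1) * h (r • (θ : E))) μ.toSphere ∧
      ∫ u, h u ∂μ = ∫ θ : sphere (0 : E) 1,
        (∫ r in Ioi (0 : ℝ), r ^ (Module.finrank ℝ E - 1) * h (r • (θ : E))) ∂μ.toSphere := by
  set n := Module.finrank ℝ E - 1
  have hmp := μ.measurePreserving_homeomorphUnitSphereProd
  have hemb := (homeomorphUnitSphereProd E).measurableEmbedding
  set H : sphere (0 : E) 1 × Ioi (0 : ℝ) → ℝ := fun p => h ((p.2 : ℝ) • (p.1 : E))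
  have hHc : H ∘ homeomorphUnitSphereProd E = fun x : ({0}ᶜ : Set E) => h x := by
    funext x
    have := homeomorphUnitSphereProd_symm_apply_coe E (homeomorphUnitSphereProd E x)
    rw [Homeomorph.symm_apply_apply] at this
    simp only [H, Function.comp_apply, ← this]
  have hHi : Integrable H (μ.toSphere.prod (.volumeIoiPow n)) := by
    rw [← hmp.integrable_comp_emb hemb, hHc]
    exact (integrableOn_iff_comap_subtypeVal (measurableSet_singleton _).compl).1 hh.integrableOn
  have hin : ∀ θ : sphere (0 : E) 1, ∫ r, H (θ, r) ∂(Measure.volumeIoiPow n) =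
      ∫ r in Ioi (0 : ℝ), r ^ n * h (r • (θ : E)) := by
    intro θ
    simp only [Measure.volumeIoiPow, ENNReal.ofReal]
    rw [integral_withDensity_eq_integral_smul
        (measurable_subtype_coe.pow_const _).real_toNNReal,
      integral_subtype_comap measurableSet_Ioi
        fun a => Real.toNNReal (a ^ n) • h (a • (θ : E)),
      setIntegral_congr_fun measurableSet_Ioi fun x hx => ?_]
    simp only [NNReal.smul_def, Real.coe_toNNReal _ (pow_nonneg (le_of_lt hx) _), smul_eq_mul]
  have hI := hHi.integral_prod_left
  simp only [hin] at hI
  refine ⟨hI, ?_⟩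
  calc ∫ u, h u ∂μ = ∫ x : ({0}ᶜ : Set E), h x ∂(μ.comap (↑)) := by
        rw [integral_subtype_comap (measurableSet_singleton _).compl h,
          restrict_compl_singleton]
    _ = ∫ p, H p ∂(μ.toSphere.prod (.volumeIoiPow n)) := by
        rw [← hHc]
        exact hmp.integral_comp hemb H
    _ = _ := by
        rw [integral_prod _ hHi]
        simp only [hin]

/-- The integral over a unit ball whose centre is within distance `1` of the origin, computed ray
by ray. -/
lemma integral_closedBall_polar {g : E → ℝ} (hg : Continuous g) {v : E} (hv : ‖v‖ < 1) :
    Integrable (fun θ : sphere (0 : E) 1 => ∫ r in (0 : ℝ)..exitRadius (θ : E) v,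
        r ^ (Module.finrank ℝ E - 1) * g (r • (θ : E))) μ.toSphere ∧
      ∫ u in closedBall v 1, g u ∂μ = ∫ θ : sphere (0 : E) 1,
        (∫ r in (0 : ℝ)..exitRadius (θ : E) v,
          r ^ (Module.finrank ℝ E - 1) * g (r • (θ : E))) ∂μ.toSphere := by
  have hgi : Integrable ((closedBall v 1).indicator g) μ :=
    (integrable_indicator_iff measurableSet_closedBall).2
      (hg.continuousOn.integrableOn_compact (isCompact_closedBall v 1))
  have hp := integral_polar μ hgi
  have key : ∀ θ : sphere (0 : E) 1,
      ∫ r in Ioi (0 : ℝ), r ^ (Module.finrank ℝ E - 1) *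
        (closedBall v 1).indicator g (r • (θ : E)) =
      ∫ r in (0 : ℝ)..exitRadius (θ : E) v,
        r ^ (Module.finrank ℝ E - 1) * g (r • (θ : E)) := by
    intro θ
    have hθ : ‖(θ : E)‖ = 1 := by simp
    have hpos : 0 ≤ exitRadius (θ : E) v := exitRadius_nonneg _ hv
    rw [intervalIntegral.integral_of_le hpos, ← Ioi_inter_Iic,
      ← setIntegral_indicator measurableSet_Iic]
    refine setIntegral_congr_fun measurableSet_Ioi fun r hr => ?_
    have := smul_mem_closedBall_iff hθ hv hr
    by_cases h : r ≤ exitRadius (θ : E) v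
    · simp [indicator_of_mem, this.2 h, mem_Iic.2 h]
    · have h' : r • (θ : E) ∉ closedBall v 1 := fun hc => h (this.1 hc)
      rw [indicator_of_notMem h', indicator_of_notMem (by simpa using h), mul_zero]
  simp only [key] at hp
  rwa [integral_indicator measurableSet_closedBall] at hp

/-! ### Differentiation with respect to the centre of the ball -/

/-- Moving the centre of the ball changes the integral at a rate given by the flux of `g` through
the unit sphere. -/
lemma hasGradientAt_integral_closedBall {g : E → ℝ} (hg : Continuous g) :
    HasGradientAt (fun v => ∫ u in closedBall v 1, g u ∂μ)
      (∫ θ : sphere (0 : E) 1, g θ • (θ : E) ∂μ.toSphere) 0 := by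
  set n := Module.finrank ℝ E - 1
  have hball : ball (0 : E) 1 ∈ nhds (0 : E) := ball_mem_nhds _ one_pos
  -- For `‖v‖ < 1` all exit radii lie in `[0, 3]`, so a bound for `g` on the ball of radius `3` is
  -- all that domination requires.
  obtain ⟨M, hM⟩ := (isCompact_closedBall (0 : E) 3).exists_bound_of_continuousOn hg.continuousOn
  have hM0 : 0 ≤ M := (norm_nonneg _).trans (hM 0 (by simp))
  have hc : ∀ θ : E, Continuous fun r : ℝ => r ^ n * g (r • θ) := fun θ => by fun_prop
  have hgs : Continuous fun θ : sphere (0 : E) 1 => g θ • (θ : E) := by fun_prop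
  have hgi : Integrable (fun θ : sphere (0 : E) 1 => g θ • (θ : E)) μ.toSphere :=
    hgs.integrable_of_hasCompactSupport (HasCompactSupport.of_compactSpace _)
  have main := (hasFDerivAt_integral_of_dominated_loc_of_lip'
    (μ := μ.toSphere) (𝕜 := ℝ) (x₀ := (0 : E)) (s := ball 0 1)
    (F := fun v (θ : sphere (0 : E) 1) => ∫ r in (0 : ℝ)..exitRadius (θ : E) v,
      r ^ n * g (r • (θ : E)))
    (F' := fun θ => InnerProductSpace.toDual ℝ E (g θ • (θ : E)))
    (bound := fun _ => 3 ^ n * M * 2) hball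
    (fun v hv => (integral_closedBall_polar μ hg (by simpa using hv)).1.aestronglyMeasurable)
    (integral_closedBall_polar μ hg (by simp)).1
    ((InnerProductSpace.toDual ℝ E).continuous.comp hgs).aestronglyMeasurable
    (Filter.Eventually.of_forall fun θ v hv => ?_) (integrable_const _)
    (Filter.Eventually.of_forall fun θ => ?_)).2
  · rw [HasGradientAt, HasGradientAtFilter]
    have hcomm := ((InnerProductSpace.toDual ℝ E).toContinuousLinearEquiv :
      E ≃L[ℝ] StrongDual ℝ E).toContinuousLinearMap.integral_comp_comm hgi
    have hcomm' : ∫ θ : sphere (0 : E) 1, InnerProductSpace.toDual ℝ E (g θ • (θ : E))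
        ∂μ.toSphere = InnerProductSpace.toDual ℝ E
          (∫ θ : sphere (0 : E) 1, g θ • (θ : E) ∂μ.toSphere) := hcomm
    rw [← hcomm']
    refine main.congr_of_eventuallyEq ?_
    filter_upwards [hball] with v hv
    exact (integral_closedBall_polar μ hg (by simpa using hv)).2
  · have hv' : ‖v‖ < 1 := by simpa using hv
    have hθ : ‖(θ : E)‖ = 1 := by simp
    have hd := abs_exitRadius_sub_one_le hθ hv'
    have hd' := abs_le.1 hd
    have hpos : (0 : ℝ) ≤ exitRadius (θ : E) v := exitRadius_nonneg _ hv'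
    rw [exitRadius_zero, intervalIntegral.integral_interval_sub_left
      ((hc θ).intervalIntegrable _ _) ((hc θ).intervalIntegrable _ _), sub_zero]
    calc _ ≤ 3 ^ n * M * |exitRadius (θ : E) v - 1| := by
          refine intervalIntegral.norm_integral_le_of_norm_le_const fun r hr => ?_
          have hr' : r ∈ Icc (0 : ℝ) 3 :=
            uIcc_subset_Icc (by simp) ⟨hpos, by linarith⟩ (uIoc_subset_uIcc hr)
          rw [norm_mul, norm_pow, Real.norm_of_nonneg hr'.1]
          refine mul_le_mul (pow_le_pow_left₀ hr'.1 hr'.2 _) (hM _ ?_) (norm_nonneg _)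
            (by positivity)
          simpa [norm_smul, abs_of_nonneg hr'.1] using hr'.2
      _ ≤ 3 ^ n * M * (2 * ‖v‖) := by gcongr
      _ = _ := by ring
  · have hθ : ‖(θ : E)‖ = 1 := by simp
    have hD : HasDerivAt (fun ρ => ∫ r in (0 : ℝ)..ρ, r ^ n * g (r • (θ : E)))
        (1 ^ n * g ((1 : ℝ) • (θ : E))) (exitRadius (θ : E) 0) := by
      rw [exitRadius_zero]
      exact (hc θ).integral_hasStrictDerivAt 0 1 |>.hasDerivAt
    refine (hD.comp_hasFDerivAt (0 : E) (hasFDerivAt_exitRadius hθ)).congr_fderiv ?_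
    ext w
    simp

end

end OnePointGradient

/-- The one-point gradient estimator identity: for a Lipschitz `f : ℝ^d → ℝ` and `δ > 0`,
the `δ`-smoothed version `f̂_δ(x) = E_{u∼𝔹}[f(x + δu)]` (with `𝔹` the uniform probability
distribution on the closed unit ball) is differentiable everywhere, with gradient
`∇f̂_δ(x) = (d/δ)·E_{u∼𝕊}[f(x + δu)·u]`, where `𝕊` is the uniform probability
distribution on the unit sphere. -/
theorem one_point_gradient_estimator
    (d : ℕ) (hd : 1 ≤ d) (δ : ℝ) (hδ : 0 < δ)
    (f : EuclideanSpace ℝ (Fin d) → ℝ) (G : NNReal) (hf : LipschitzWith G f) :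
    ∀ x : EuclideanSpace ℝ (Fin d),
      HasGradientAt
        (fun y => ∫ u, f (y + δ • u)
          ∂(ProbabilityTheory.cond (volume : Measure (EuclideanSpace ℝ (Fin d)))
              (Metric.closedBall 0 1)))
        (((d : ℝ) / δ) •
          ∫ u : Metric.sphere (0 : EuclideanSpace ℝ (Fin d)) 1,
            f (x + δ • (u : EuclideanSpace ℝ (Fin d))) • (u : EuclideanSpace ℝ (Fin d))
          ∂((((volume : Measure (EuclideanSpace ℝ (Fin d))).toSphere Set.univ)⁻¹ •
              (volume : Measure (EuclideanSpace ℝ (Fin d))).toSphere)))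
        x := by
  intro x
  have : NeZero d := ⟨by omega⟩
  have : Nontrivial (EuclideanSpace ℝ (Fin d)) := by
    refine ⟨EuclideanSpace.single 0 1, 0, fun h => ?_⟩
    simpa using congrArg (fun w : EuclideanSpace ℝ (Fin d) => w 0) h
  have hgc : Continuous fun u : EuclideanSpace ℝ (Fin d) => f (x + δ • u) := by
    have := hf.continuous
    fun_prop
  have h0 := OnePointGradient.hasGradientAt_integral_closedBall (volume : Measure (EuclideanSpace ℝ (Fin d))) hgc
  set B : ℝ := (volume : Measure (EuclideanSpace ℝ (Fin d))).real (Metric.closedBall 0 1)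
  have hσ : ((volume : Measure (EuclideanSpace ℝ (Fin d))).toSphere Set.univ).toReal = d * B := by
    have := Measure.toSphere_real_apply_univ (volume : Measure (EuclideanSpace ℝ (Fin d)))
    rw [Measure.real] at this
    rw [this, finrank_euclideanSpace_fin, ← Measure.addHaar_real_closedBall_eq_addHaar_real_ball]
  -- After the substitution `v = δ⁻¹ • (y - x)`, averaging over the unit ball centred at the origin
  -- becomes averaging over the one centred at `v`.
  have hfun : (fun y => ∫ u, f (y + δ • u)
      ∂(ProbabilityTheory.cond (volume : Measure (EuclideanSpace ℝ (Fin d))) (Metric.closedBall 0 1))) =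
      fun y => B⁻¹ * ∫ u in Metric.closedBall (δ⁻¹ • (y - x)) 1, f (x + δ • u) := by
    funext y
    rw [ProbabilityTheory.cond, integral_smul_measure, smul_eq_mul, ENNReal.toReal_inv]
    congr 1
    have h := (measurePreserving_add_right (volume : Measure (EuclideanSpace ℝ (Fin d)))
      (δ⁻¹ • (y - x))).setIntegral_preimage_emb (measurableEmbedding_addRight _)
      (fun u => f (x + δ • u)) (Metric.closedBall (δ⁻¹ • (y - x)) 1)
    rw [← h]
    have hpre : (fun u : EuclideanSpace ℝ (Fin d) => u + δ⁻¹ • (y - x)) ⁻¹' Metric.closedBall (δ⁻¹ • (y - x)) 1 =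
        Metric.closedBall 0 1 := by
      ext u
      simp [dist_eq_norm]
    rw [hpre]
    refine integral_congr_ae (Filter.Eventually.of_forall fun u => ?_)
    have : y + δ • u = x + δ • (u + δ⁻¹ • (y - x)) := by
      rw [smul_add, smul_inv_smul₀ hδ.ne']
      abel
    simp only [this]
  rw [hfun]
  have hL : HasFDerivAt (fun y : EuclideanSpace ℝ (Fin d) => δ⁻¹ • (y - x)) (δ⁻¹ • ContinuousLinearMap.id ℝ _) x :=
    ((hasFDerivAt_id x).sub_const x).const_smul δ⁻¹
  have hz : δ⁻¹ • (x - x) = 0 := by simp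
  rw [hasGradientAt_iff_hasFDerivAt] at h0 ⊢
  refine ((HasFDerivAt.comp x (hz.symm.rec (motive := fun z _ => HasFDerivAt _ _ z) h0) hL).const_mul B⁻¹).congr_fderiv ?_
  rw [integral_smul_measure, ENNReal.toReal_inv, hσ]
  have hd0 : (d : ℝ) ≠ 0 := Nat.cast_ne_zero.2 (by omega)
  ext w
  simp
  field_simp
end

section
/- Let K be a nonempty set, let f₁, …, f_T : K → ℝ and ℛ : K → ℝ, and suppose x̂₁, …, x̂_{T+1} ∈ K are such that for each t ∈ {1, …, T+1}, x̂_t minimizes x ↦ Σ_{i=1}^{t−1} f_i(x) + ℛ(x) over K (for t = 1 this means x̂₁ minimizes ℛ over K). Then for every x ∈ K, Σ_{t=1}^T (f_t(x̂_t) − f_t(x)) ≤ ℛ(x) − ℛ(x̂₁) + Σ_{t=1}^T (f_t(x̂_t) − f_t(x̂_{t+1})). -/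
/-!
Subtracting `∑ f t (xh t)` from both sides, the claim is the "be the leader" inequality
`∑_{t ≤ T} f t (xh (t + 1)) + ℛ (xh 1) ≤ ∑_{t ≤ T} f t x + ℛ x`. It is proved by induction on the
horizon: the bound for horizon `n`, taken at the comparator `xh (n + 2)`, gains the same term
`f (n + 1) (xh (n + 2))` on both sides, and `xh (n + 2)` minimizes the resulting right-hand side.
-/

/-- The follow-the-regularized-leader (FTRL) regret lemma: if `x̂ t` minimizes
the sum of the first `t − 1` losses plus the regularizer `ℛ` over `K`, then the regret
against any comparator `x` is controlled by the regularizer gap plus stability terms. -/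
theorem ftrl_regret_lemma
    (K : Type*) (T : ℕ) (f : ℕ → K → ℝ) (ℛ : K → ℝ) (xh : ℕ → K)
    (hmin : ∀ t ∈ Finset.Icc 1 (T + 1), ∀ x : K,
      (∑ i ∈ Finset.Icc 1 (t - 1), f i (xh t)) + ℛ (xh t) ≤
        (∑ i ∈ Finset.Icc 1 (t - 1), f i x) + ℛ x) :
    ∀ x : K, ∑ t ∈ Finset.Icc 1 T, (f t (xh t) - f t x) ≤
      ℛ x - ℛ (xh 1) + ∑ t ∈ Finset.Icc 1 T, (f t (xh t) - f t (xh (t + 1))) := by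
  have leader : ∀ n ≤ T, ∀ x : K,
      ∑ t ∈ Finset.Icc 1 n, f t (xh (t + 1)) + ℛ (xh 1) ≤
        ∑ t ∈ Finset.Icc 1 n, f t x + ℛ x := by
    intro n
    induction n with
    | zero =>
      intro _ x
      simpa using hmin 1 (by simp) x
    | succ n ih =>
      intro hn x
      have h1 := ih (by omega) (xh (n + 2))
      have h2 := hmin (n + 2) (Finset.mem_Icc.mpr ⟨by omega, by omega⟩) x
      rw [show n + 2 - 1 = n + 1 by omega, Finset.sum_Icc_succ_top (by omega),
        Finset.sum_Icc_succ_top (by omega)] at h2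
      rw [Finset.sum_Icc_succ_top (by omega), Finset.sum_Icc_succ_top (by omega)]
      linarith
  intro x
  have h := leader T le_rfl x
  simp only [Finset.sum_sub_distrib]
  linarith
end

section
/- Let n ≥ 1 and let P be an n×n real matrix with nonnegative entries that is symmetric and doubly stochastic (each row and each column sums to 1), and let σ denote its second largest singular value, which for such a matrix equals the ℓ² operator norm of P − (1/n)𝟏𝟏ᵀ, where 𝟏𝟏ᵀ is the all-ones n×n matrix; assume σ < 1. Let B ≥ 1, Ĝ > 0, and for each i ∈ {1,…,n} let d_i(1), …, d_i(B) ∈ ℝ^D be vectors with ‖d_i(m)‖₂ ≤ Ĝ for all i and m. Define z_i(1) = 0 and z_i(m+1) = Σ_{j=1}^n P_{ij} z_j(m) + d_i(m) for m ∈ {1,…,B}, and z̄(m) = (1/n)Σ_{i=1}^n z_i(m). Then for every i ∈ {1,…,n} and m ∈ {1,…,B}, ‖z_i(m) − z̄(m)‖₂ ≤ Ĝ√n/(1 − σ). -/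
/-!
Write `e(m)` for the family of deviations `z_i(m) - z̄(m)`, regarded as a vector of the `ℓ²` direct
sum of `n` copies of `ℝ^D`, and `Q = P - (1/n)𝟏𝟏ᵀ`. Since `P` is doubly stochastic, averaging
commutes with the recursion and `Q` kills constant families, so
`e(m+1) = Q e(m) + (d(m) - d̄(m))` (`deviation_succ`). The matrix `Q` acts on families with the same
operator norm `σ` as on `ℝ^n`, because it acts on each of the `D` coordinates separately
(`norm_matrix_smul_le`), and centring a family does not increase its `ℓ²` norm
(`norm_centered_le`), so that the perturbation term is at most `Ĝ√n`. Hence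
`‖e(m+1)‖ ≤ σ‖e(m)‖ + Ĝ√n`, and `Ĝ√n/(1 - σ)` is the fixed point of the right-hand side: the bound
`‖e(m)‖ ≤ Ĝ√n/(1 - σ)` is preserved along the recursion, and it dominates each `‖e_i(m)‖`.
-/

/-- Letting a real matrix act on a family of vectors of `ℝ^D`, i.e. on each coordinate separately,
does not increase its `ℓ²` operator norm. -/
lemma norm_matrix_smul_le {n D : ℕ} (Q : Matrix (Fin n) (Fin n) ℝ)
    (v : Fin n → EuclideanSpace ℝ (Fin D)) :
    ‖WithLp.toLp 2 (fun i => ∑ j, Q i j • v j)‖ ≤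
      ‖Matrix.toEuclideanCLM (𝕜 := ℝ) (n := Fin n) Q‖ * ‖WithLp.toLp 2 v‖ := by
  set A := Matrix.toEuclideanCLM (𝕜 := ℝ) (n := Fin n) Q with hA
  refine le_of_abs_le (abs_le_of_sq_le_sq ?_ (by positivity))
  rw [mul_pow, PiLp.norm_sq_eq_of_L2, PiLp.norm_sq_eq_of_L2]
  simp only [EuclideanSpace.real_norm_sq_eq]
  rw [Finset.sum_comm, Finset.sum_comm (s := Finset.univ (α := Fin n)), Finset.mul_sum]
  refine Finset.sum_le_sum fun k _ => ?_
  have h := A.le_opNorm (WithLp.toLp 2 fun j => v j k)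
  have h2 := pow_le_pow_left₀ (norm_nonneg _) h 2
  rw [mul_pow, EuclideanSpace.real_norm_sq_eq, EuclideanSpace.real_norm_sq_eq] at h2
  simpa [hA, Matrix.mulVec, dotProduct] using h2

/-- Subtracting the mean from a family of vectors is an orthogonal projection, hence does not
increase the `ℓ²` norm. -/
lemma norm_centered_le {n D : ℕ} (hn : 1 ≤ n) (d : Fin n → EuclideanSpace ℝ (Fin D)) :
    ‖WithLp.toLp 2 (fun i => d i - (n : ℝ)⁻¹ • ∑ j, d j)‖ ≤ ‖WithLp.toLp 2 d‖ := by
  have hn0 : (n : ℝ) ≠ 0 := by positivity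
  refine le_of_abs_le (abs_le_of_sq_le_sq ?_ (norm_nonneg _))
  rw [PiLp.norm_sq_eq_of_L2, PiLp.norm_sq_eq_of_L2]
  set b := (n : ℝ)⁻¹ • ∑ j, d j with hb
  have hsum : ∑ j, d j = (n : ℝ) • b := by rw [hb, smul_inv_smul₀ hn0]
  have hkey : ∑ i, ‖d i - b‖ ^ 2 = ∑ i, ‖d i‖ ^ 2 - n * ‖b‖ ^ 2 := by
    simp only [norm_sub_sq_real, Finset.sum_add_distrib, Finset.sum_sub_distrib,
      ← Finset.mul_sum, ← sum_inner, hsum, real_inner_smul_left, real_inner_self_eq_norm_sq]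
    simp
    ring
  have : 0 ≤ (n : ℝ) * ‖b‖ ^ 2 := by positivity
  simp only []
  linarith

/-- One step of the recursion for the deviations from the mean. The matrix `P - (1/n)𝟏𝟏ᵀ` is
applied to the deviations, not to the states, which is legitimate because its rows sum to `0`. -/
lemma deviation_succ {n D : ℕ} (hn : 1 ≤ n) (P : Matrix (Fin n) (Fin n) ℝ)
    (hrow : ∀ i, ∑ j, P i j = 1) (hcol : ∀ j, ∑ i, P i j = 1)
    (x y d : Fin n → EuclideanSpace ℝ (Fin D))
    (hy : ∀ i, y i = (∑ j, P i j • x j) + d i) (i : Fin n) :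
    y i - (n : ℝ)⁻¹ • ∑ j, y j =
      ∑ j, (P - Matrix.of fun _ _ => (n : ℝ)⁻¹ : Matrix (Fin n) (Fin n) ℝ) i j • (x j - (n : ℝ)⁻¹ • ∑ k, x k) +
        (d i - (n : ℝ)⁻¹ • ∑ j, d j) := by
  have hn0 : (n : ℝ) ≠ 0 := by positivity
  have hmean : ∑ k, ∑ j, P k j • x j = ∑ j, x j := by
    rw [Finset.sum_comm]
    simp [← Finset.sum_smul, hcol]
  have hzero : ∑ j, (P - Matrix.of fun _ _ => (n : ℝ)⁻¹ : Matrix (Fin n) (Fin n) ℝ) i j = 0 := by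
    simp [Finset.sum_sub_distrib, hrow, hn0]
  have hQ : ∑ j, (P - Matrix.of fun _ _ => (n : ℝ)⁻¹ : Matrix (Fin n) (Fin n) ℝ) i j • (x j - (n : ℝ)⁻¹ • ∑ k, x k) =
      ∑ j, P i j • x j - (n : ℝ)⁻¹ • ∑ j, x j := by
    simp only [smul_sub, Finset.sum_sub_distrib, ← Finset.sum_smul, hzero]
    simp [sub_smul, Finset.sum_sub_distrib, Finset.smul_sum]
  rw [hQ]
  simp only [hy, Finset.sum_add_distrib, hmean, smul_add]
  abel


/-- Consensus bound for a gossip-type linear recursion driven by bounded perturbations: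
if `P` is a nonnegative symmetric doubly stochastic matrix whose second largest singular
value `σ` (the `ℓ²` operator norm of `P − (1/n)𝟏𝟏ᵀ`) is strictly less than `1`,
`z_i(1) = 0`, and `z_i(m+1) = Σ_j P_{ij} z_j(m) + d_i(m)` with `‖d_i(m)‖ ≤ Ĝ`, then
`‖z_i(m) − z̄(m)‖ ≤ Ĝ√n/(1 − σ)` for all `i` and `m ∈ {1,…,B}`. -/
theorem gossip_consensus_bound
    (n : ℕ) (hn : 1 ≤ n) (P : Matrix (Fin n) (Fin n) ℝ)
    (hpos : ∀ i j, 0 ≤ P i j)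
    (hsymm : P.IsSymm)
    (hrow : ∀ i, ∑ j, P i j = 1)
    (hcol : ∀ j, ∑ i, P i j = 1)
    (σ : ℝ)
    (hσ : σ = ‖Matrix.toEuclideanCLM (𝕜 := ℝ) (n := Fin n)
      (P - Matrix.of fun _ _ => (n : ℝ)⁻¹)‖)
    (hσlt : σ < 1)
    (B : ℕ) (hB : 1 ≤ B)
    (D : ℕ) (Ghat : ℝ) (hGhat : 0 < Ghat)
    (dvec z : Fin n → ℕ → EuclideanSpace ℝ (Fin D))
    (hd : ∀ (i : Fin n), ∀ m ∈ Finset.Icc 1 B, ‖dvec i m‖ ≤ Ghat)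
    (hz1 : ∀ i : Fin n, z i 1 = 0)
    (hrec : ∀ (i : Fin n), ∀ m ∈ Finset.Icc 1 B,
      z i (m + 1) = (∑ j, P i j • z j m) + dvec i m) :
    ∀ (i : Fin n), ∀ m ∈ Finset.Icc 1 B,
      ‖z i m - (n : ℝ)⁻¹ • ∑ j, z j m‖ ≤ Ghat * Real.sqrt n / (1 - σ) := by
  have hσ0 : 0 ≤ σ := hσ ▸ norm_nonneg _
  have h1σ : 0 < 1 - σ := by linarith
  have hperturb : ∀ m ∈ Finset.Icc 1 B,
      ‖WithLp.toLp 2 (fun i => dvec i m)‖ ≤ Ghat * Real.sqrt n := by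
    intro m hm
    refine le_of_abs_le (abs_le_of_sq_le_sq ?_ (by positivity))
    rw [PiLp.norm_sq_eq_of_L2, mul_pow, Real.sq_sqrt (Nat.cast_nonneg n)]
    calc ∑ i, ‖dvec i m‖ ^ 2 ≤ ∑ _i : Fin n, Ghat ^ 2 :=
          Finset.sum_le_sum fun i _ => pow_le_pow_left₀ (norm_nonneg _) (hd i m hm) 2
      _ = Ghat ^ 2 * n := by simp [mul_comm]
  have hdev : ∀ m, 1 ≤ m → m ≤ B →
      ‖WithLp.toLp 2 (fun i => z i m - (n : ℝ)⁻¹ • ∑ j, z j m)‖ ≤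
        Ghat * Real.sqrt n / (1 - σ) := by
    intro m hm
    induction m, hm using Nat.le_induction with
    | base =>
      intro _
      have h0 : (fun i => z i 1 - (n : ℝ)⁻¹ • ∑ j, z j 1) = 0 := by
        funext i
        simp [hz1]
      rw [h0, WithLp.toLp_zero, norm_zero]
      positivity
    | succ m hm ih =>
      intro hmB
      have hmem : m ∈ Finset.Icc 1 B := Finset.mem_Icc.2 ⟨hm, by omega⟩
      have hstep := funext (deviation_succ hn P hrow hcol (fun i => z i m)
        (fun i => z i (m + 1)) (fun i => dvec i m) fun i => hrec i m hmem)
      rw [hstep]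
      have hQ := norm_matrix_smul_le (P - Matrix.of fun _ _ => (n : ℝ)⁻¹)
        fun i => z i m - (n : ℝ)⁻¹ • ∑ j, z j m
      rw [← hσ] at hQ
      have hd' := (norm_centered_le hn fun i => dvec i m).trans (hperturb m hmem)
      have hih := mul_le_mul_of_nonneg_left (ih (by omega)) hσ0
      have hfix : σ * (Ghat * Real.sqrt n / (1 - σ)) + Ghat * Real.sqrt n =
          Ghat * Real.sqrt n / (1 - σ) := by
        field_simp
        ring
      have hbound := norm_add_le_of_le (hQ.trans hih) hd'
      rw [hfix, ← WithLp.toLp_add] at hbound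
      exact hbound
  intro i m hm
  obtain ⟨hm1, hmB⟩ := Finset.mem_Icc.1 hm
  exact (PiLp.norm_apply_le
    (WithLp.toLp 2 (fun i => z i m - (n : ℝ)⁻¹ • ∑ j, z j m)) i).trans (hdev m hm1 hmB)
end

section
/- Let n ≥ 1 and let P be an n×n real matrix with nonnegative entries that is symmetric and doubly stochastic (each row and each column sums to 1), and let σ denote its second largest singular value, which for such a matrix equals the ℓ² operator norm of P − (1/n)𝟏𝟏ᵀ, where 𝟏𝟏ᵀ is the all-ones n×n matrix; assume σ < 1. Let B ≥ 1, Ĝ > 0, and for each i ∈ {1,…,n} let d_i(1), …, d_i(B) be integrable random vectors in ℝ^D on a common probability space with E[‖d_i(m)‖₂] ≤ Ĝ for all i and m. Define z_i(1) = 0 and z_i(m+1) = Σ_{j=1}^n P_{ij} z_j(m) + d_i(m) for m ∈ {1,…,B}, and z̄(m) = (1/n)Σ_{i=1}^n z_i(m). Then for every i ∈ {1,…,n} and m ∈ {1,…,B}, E[‖z_i(m) − z̄(m)‖₂] ≤ Ĝ√n/(1 − σ). -/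
open MeasureTheory

/-!
Write `J = (1/n)𝟏𝟏ᵀ`, `A = P - J` and `Q = 1 - J`. Unrolling the recursion from `z(1) = 0` gives
`z(m+1) - z̄(m+1) = Q z(m+1) = ∑_{k<m} Q P^k d(m-k)`. Double stochasticity yields `Q P = A Q`, so
`Q P^k = A^k Q`, and since `Q` is an orthogonal projection this matrix has `ℓ²` operator norm at
most `σ^k`. Each of its rows therefore has `ℓ¹` norm at most `√n σ^k`. Taking norms and
expectations, each summand contributes at most `Ghat √n σ^k`, and the geometric series gives
`Ghat √n / (1 - σ)`.
-/

/-- Every row of a matrix has `ℓ¹` norm at most `√n` times the `ℓ²` operator norm: the `ℓ¹` norm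
is the corresponding coordinate of the image of the sign vector of the row. -/
lemma sum_abs_row_le {n : ℕ} (M : Matrix (Fin n) (Fin n) ℝ) (i : Fin n) :
    ∑ j, |M i j| ≤ ‖Matrix.toEuclideanCLM (𝕜 := ℝ) (n := Fin n) M‖ * √n := by
  set s : EuclideanSpace ℝ (Fin n) := WithLp.toLp 2 fun j => ((SignType.sign (M i j) : SignType) : ℝ)
    with hs
  have hsn : ‖s‖ ≤ √n := by
    rw [EuclideanSpace.norm_eq]
    apply Real.sqrt_le_sqrt
    calc ∑ j, ‖s j‖ ^ 2 ≤ ∑ _j : Fin n, (1 : ℝ) := by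
          apply Finset.sum_le_sum
          intro j _
          rcases lt_trichotomy (M i j) 0 with h | h | h <;> simp [hs, h]
      _ = n := by simp
  have hval : (Matrix.toEuclideanCLM (𝕜 := ℝ) (n := Fin n) M s) i = ∑ j, |M i j| := by
    simp [hs, Matrix.mulVec, dotProduct, self_mul_sign]
  calc ∑ j, |M i j| = (Matrix.toEuclideanCLM (𝕜 := ℝ) (n := Fin n) M s) i := hval.symm
    _ ≤ ‖(Matrix.toEuclideanCLM (𝕜 := ℝ) (n := Fin n) M s) i‖ := Real.le_norm_self _
    _ ≤ ‖Matrix.toEuclideanCLM (𝕜 := ℝ) (n := Fin n) M s‖ := PiLp.norm_apply_le _ _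
    _ ≤ _ := (ContinuousLinearMap.le_opNorm _ _).trans (by gcongr)

/-- The centering matrix `1 - (1/n)𝟏𝟏ᵀ` is an orthogonal projection, hence a contraction. -/
lemma norm_centering_le_one {n : ℕ} (hn : 1 ≤ n) :
    ‖Matrix.toEuclideanCLM (𝕜 := ℝ) (n := Fin n)
      (1 - Matrix.of fun _ _ => (n : ℝ)⁻¹)‖ ≤ 1 := by
  have hn0 : (n : ℝ) ≠ 0 := by positivity
  have hJ : IsStarProjection (Matrix.of fun _ _ => (n : ℝ)⁻¹ : Matrix (Fin n) (Fin n) ℝ) := by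
    constructor
    · ext i j
      simp [Matrix.mul_apply, hn0]
    · ext i j
      simp [Matrix.star_apply]
  exact (hJ.one_sub.map (Matrix.toEuclideanCLM (𝕜 := ℝ) (n := Fin n))).norm_le

/-- `Q P^k = A^k Q` with `J = (1/n)𝟏𝟏ᵀ`, `A = P - J` and `Q = 1 - J`. -/
lemma centering_mul_pow {n : ℕ} (hn : 1 ≤ n) (P : Matrix (Fin n) (Fin n) ℝ)
    (hrow : ∀ i, ∑ j, P i j = 1) (hcol : ∀ j, ∑ i, P i j = 1) (k : ℕ) :
    (1 - Matrix.of fun _ _ => (n : ℝ)⁻¹) * P ^ k =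
      (P - Matrix.of fun _ _ => (n : ℝ)⁻¹) ^ k * (1 - Matrix.of fun _ _ => (n : ℝ)⁻¹) := by
  have hn0 : (n : ℝ) ≠ 0 := by positivity
  set J : Matrix (Fin n) (Fin n) ℝ := Matrix.of fun _ _ => (n : ℝ)⁻¹ with hJ
  have hJJ : J * J = J := by
    ext i j
    simp [hJ, Matrix.mul_apply, hn0]
  have hPJ : P * J = J := by
    ext i j
    simp [hJ, Matrix.mul_apply, ← Finset.sum_mul, hrow]
  have hJP : J * P = J := by
    ext i j
    simp [hJ, Matrix.mul_apply, ← Finset.mul_sum, hcol]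
  have h : SemiconjBy (1 - J) P (P - J) := by
    simp [SemiconjBy, sub_mul, mul_sub, hJJ, hPJ, hJP]
  exact (h.pow_right k).eq

/-- Expected-norm consensus bound for a gossip-type linear recursion driven by random
perturbations with bounded expected norm: if `P` is a nonnegative symmetric doubly
stochastic matrix whose second largest singular value `σ` (the `ℓ²` operator norm of
`P − (1/n)𝟏𝟏ᵀ`) is strictly less than `1`, `z_i(1) = 0`, and
`z_i(m+1) = Σ_j P_{ij} z_j(m) + d_i(m)` with `E[‖d_i(m)‖] ≤ Ĝ`, then
`E[‖z_i(m) − z̄(m)‖] ≤ Ĝ√n/(1 − σ)` for all `i` and `m ∈ {1,…,B}`. -/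
theorem gossip_consensus_bound_expectation
    (n : ℕ) (hn : 1 ≤ n) (P : Matrix (Fin n) (Fin n) ℝ)
    (hpos : ∀ i j, 0 ≤ P i j)
    (hsymm : P.IsSymm)
    (hrow : ∀ i, ∑ j, P i j = 1)
    (hcol : ∀ j, ∑ i, P i j = 1)
    (σ : ℝ)
    (hσ : σ = ‖Matrix.toEuclideanCLM (𝕜 := ℝ) (n := Fin n)
      (P - Matrix.of fun _ _ => (n : ℝ)⁻¹)‖)
    (hσlt : σ < 1)
    (B : ℕ) (hB : 1 ≤ B)
    (D : ℕ) (Ghat : ℝ) (hGhat : 0 < Ghat)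
    (Ω : Type*) [MeasurableSpace Ω] (μ : Measure Ω) [IsProbabilityMeasure μ]
    (dvec z : Fin n → ℕ → Ω → EuclideanSpace ℝ (Fin D))
    (hint : ∀ (i : Fin n), ∀ m ∈ Finset.Icc 1 B, Integrable (dvec i m) μ)
    (hd : ∀ (i : Fin n), ∀ m ∈ Finset.Icc 1 B, (∫ ω, ‖dvec i m ω‖ ∂μ) ≤ Ghat)
    (hz1 : ∀ (i : Fin n) (ω : Ω), z i 1 ω = 0)
    (hrec : ∀ (i : Fin n), ∀ m ∈ Finset.Icc 1 B, ∀ ω : Ω,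
      z i (m + 1) ω = (∑ j, P i j • z j m ω) + dvec i m ω) :
    ∀ (i : Fin n), ∀ m ∈ Finset.Icc 1 B,
      (∫ ω, ‖z i m ω - (n : ℝ)⁻¹ • ∑ j, z j m ω‖ ∂μ) ≤ Ghat * Real.sqrt n / (1 - σ) := by
  set J : Matrix (Fin n) (Fin n) ℝ := Matrix.of fun _ _ => (n : ℝ)⁻¹ with hJ
  have hσ0 : 0 ≤ σ := hσ ▸ norm_nonneg _
  -- The recursion unrolled, seen through an arbitrary matrix `M`.
  have hunroll : ∀ m, m + 1 ≤ B → ∀ (M : Matrix (Fin n) (Fin n) ℝ) (i : Fin n) (ω : Ω),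
      ∑ j, M i j • z j (m + 1) ω =
        ∑ k ∈ Finset.range m, ∑ j, (M * P ^ k) i j • dvec j (m - k) ω := by
    intro m
    induction m with
    | zero => intro _ M i ω; simp [hz1]
    | succ m ih =>
      intro hm M i ω
      have hstep : ∑ j, M i j • z j (m + 1 + 1) ω =
          ∑ j, (M * P) i j • z j (m + 1) ω + ∑ j, M i j • dvec j (m + 1) ω := by
        simp_rw [hrec _ (m + 1) (Finset.mem_Icc.2 ⟨by omega, by omega⟩), smul_add,
          Finset.sum_add_distrib, Matrix.mul_apply, Finset.sum_smul, Finset.smul_sum, smul_smul]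
        rw [Finset.sum_comm]
      rw [hstep, ih (by omega), Finset.sum_range_succ']
      simp [pow_succ', Matrix.mul_assoc]
  have hrowbound : ∀ (k : ℕ) (i : Fin n), ∑ j, |((1 - J) * P ^ k) i j| ≤ σ ^ k * √n := by
    intro k i
    refine (sum_abs_row_le _ i).trans ?_
    gcongr
    rw [centering_mul_pow hn P hrow hcol k, map_mul, map_pow]
    calc _ ≤ ‖Matrix.toEuclideanCLM (𝕜 := ℝ) (n := Fin n) (P - J) ^ k‖ *
            ‖Matrix.toEuclideanCLM (𝕜 := ℝ) (n := Fin n) (1 - J)‖ := norm_mul_le _ _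
      _ ≤ σ ^ k * 1 := by
          gcongr
          · rw [hσ]
            -- `norm_pow_le` needs the norm of the identity to be `1`, which uses `n ≠ 0`.
            have : Nonempty (Fin n) := ⟨i⟩
            exact norm_pow_le _ _
          · exact norm_centering_le_one hn
      _ = σ ^ k := mul_one _
  intro i m hm
  obtain ⟨hm1, hmB⟩ := Finset.mem_Icc.1 hm
  obtain ⟨m, rfl⟩ : ∃ l, m = l + 1 := ⟨m - 1, by omega⟩
  have hmem : ∀ k ∈ Finset.range m, m - k ∈ Finset.Icc 1 B := by
    intro k hk
    have := Finset.mem_range.1 hk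
    exact Finset.mem_Icc.2 ⟨by omega, by omega⟩
  have hdev : ∀ ω, z i (m + 1) ω - (n : ℝ)⁻¹ • ∑ j, z j (m + 1) ω =
      ∑ k ∈ Finset.range m, ∑ j, ((1 - J) * P ^ k) i j • dvec j (m - k) ω := by
    intro ω
    rw [← hunroll m hmB]
    simp [hJ, sub_smul, Matrix.one_apply, Finset.smul_sum]
  have hintk : ∀ k ∈ Finset.range m, ∀ j ∈ Finset.univ,
      Integrable (fun ω => |((1 - J) * P ^ k) i j| * ‖dvec j (m - k) ω‖) μ :=
    fun k hk j _ => ((hint j _ (hmem k hk)).norm).const_mul _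
  calc (∫ ω, ‖z i (m + 1) ω - (n : ℝ)⁻¹ • ∑ j, z j (m + 1) ω‖ ∂μ)
      ≤ ∫ ω, ∑ k ∈ Finset.range m, ∑ j,
          |((1 - J) * P ^ k) i j| * ‖dvec j (m - k) ω‖ ∂μ := by
        refine integral_mono_of_nonneg (Filter.Eventually.of_forall fun ω => norm_nonneg _)
          (integrable_finsetSum _ fun k hk => integrable_finsetSum _ (hintk k hk))
          (Filter.Eventually.of_forall fun ω => ?_)
        simp only [hdev]
        refine (norm_sum_le _ _).trans (Finset.sum_le_sum fun k _ => ?_)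
        refine (norm_sum_le _ _).trans (Finset.sum_le_sum fun j _ => ?_)
        rw [norm_smul, Real.norm_eq_abs]
    _ = ∑ k ∈ Finset.range m, ∑ j,
          |((1 - J) * P ^ k) i j| * ∫ ω, ‖dvec j (m - k) ω‖ ∂μ := by
        rw [integral_finsetSum _ fun k hk => integrable_finsetSum _ (hintk k hk)]
        refine Finset.sum_congr rfl fun k hk => ?_
        rw [integral_finsetSum _ (hintk k hk)]
        simp_rw [integral_const_mul]
    _ ≤ ∑ k ∈ Finset.range m, σ ^ k * √n * Ghat := by
        refine Finset.sum_le_sum fun k hk => ?_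
        calc _ ≤ ∑ j, |((1 - J) * P ^ k) i j| * Ghat :=
              Finset.sum_le_sum fun j _ => by gcongr; exact hd j _ (hmem k hk)
          _ = (∑ j, |((1 - J) * P ^ k) i j|) * Ghat := by rw [Finset.sum_mul]
          _ ≤ σ ^ k * √n * Ghat := by gcongr; exact hrowbound k i
    _ = (∑ k ∈ Finset.range m, σ ^ k) * (Ghat * √n) := by
        rw [Finset.sum_mul]
        exact Finset.sum_congr rfl fun k _ => by ring
    _ ≤ (1 - σ)⁻¹ * (Ghat * √n) := by
        gcongr
        rw [← tsum_geometric_of_lt_one hσ0 hσlt]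
        exact (summable_geometric_of_lt_one hσ0 hσlt).sum_le_tsum _ fun k _ => pow_nonneg hσ0 k
    _ = Ghat * √n / (1 - σ) := by rw [div_eq_inv_mul]
end

section
/- Under the D-BOCG setup, let ε_m = max_{i∈{1,…,n}} (F_{m−1,i}(x_i(m)) − min_{x∈K̂} F_{m−1,i}(x)) for 2 ≤ m ≤ B, where the decisions x_i(m) ∈ K̂ for m ≥ 2 are arbitrary points of K̂. Then for every learner i ∈ {1,…,n}, R_{T,i} ≤ 3nGK·Σ_{m=2}^B √(2ε_m/((m−2)αK + 2h)) + 3nGK·Σ_{m=2}^B K(G+αR)√n / (((m−2)αK + 2h)(1 − σ)) + n·Σ_{m=1}^B 4K²(G+2αR)² / (mαK + 2h) + 4nhR². -/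
/-!
Averaging the dual variables over the learners gives `z̄(m+1) = z̄(m) + δ̄(m)`, where
`δ̄(m)` is the mean of `ĝ_j(m) - αK x_j(m)`, because the mixing matrix preserves means. Let `y(m)`
minimise over `K̂` the surrogate built from `z̄(m)`. This is a follow-the-regularised-leader sequence
for the block losses `⟪δ̄(m), ·⟫ + (αK/2) ‖·‖²`, and all plays of block `m` are close to `y(m-1)`:

* by quadratic growth, an `ε`-approximate minimiser is within `√(2ε/c)` of the exact minimiser of
  the learner's own surrogate, `c` being the strong convexity constant
  (`DBOCG.dist_le_of_approx_min`);
* this exact minimiser is within `‖z_i - z̄‖ / c` of `y(m-1)` (`DBOCG.dist_surrogate_min_le`), and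
  `‖z_i - z̄‖ ≤ √n K(G+αR)/(1-σ)` since mixing contracts deviations by `σ`
  (`DBOCG.consensus_error`).

By Lipschitz continuity and strong convexity, each loss of learner `j` costs at most `3G` times
this distance plus a linear-quadratic term (`DBOCG.round_regret_le`). Summed over learners and
rounds, the linear-quadratic terms are `n` times the regret of the leader `y(m-1)` on the block
losses. That leader lags two steps behind, and its regret is bounded by comparison with the leader
`y(m+1)` (`DBOCG.delayed_ftrl`).

The gradient bound `‖∇f‖ ≤ G` is needed also on the boundary of `K̂`; there it follows from
`K̂` having interior (`DBOCG.norm_gradient_le`).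
-/

open scoped RealInnerProductSpace

namespace DBOCG

variable {E : Type*} [NormedAddCommGroup E] [InnerProductSpace ℝ E]

/-! ### Gradients of Lipschitz functions on a convex body -/

/-- A function that is `G`-Lipschitz on a convex set containing a ball around `0` has gradient of norm
at most `G` at every point `x` of the set, including boundary points: for `‖u‖ ≤ 1` both
`x + t (-x + r u)` and `x - t x` stay in the set for small `t ≥ 0`, and comparing the two
directional derivatives isolates `⟪g, u⟫`. -/
theorem norm_gradient_le [CompleteSpace E] [Nontrivial E] {S : Set E} (hS : Convex ℝ S) {r G : ℝ} (hr : 0 < r)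
    (hball : Metric.closedBall 0 r ⊆ S) {f : E → ℝ} {x g : E} (hx : x ∈ S)
    (hf : HasGradientAt f g x)
    (hlip : ∀ a ∈ S, ∀ b ∈ S, |f a - f b| ≤ G * ‖a - b‖) : ‖g‖ ≤ G := by
  have key : ∀ u : E, ‖u‖ ≤ 1 → ⟪g, u⟫ ≤ G * ‖u‖ := by
    intro u hu
    have hline : ∀ w : E, HasDerivAt (fun t : ℝ => f (x + t • w)) ⟪g, w⟫ 0 := by
      intro w
      have h1 : HasDerivAt (fun t : ℝ => x + t • w) w 0 := by
        simpa using ((hasDerivAt_id (0 : ℝ)).smul_const w).const_add x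
      have h2 : HasFDerivAt f (InnerProductSpace.toDual ℝ E g) (x + (0 : ℝ) • w) := by
        simpa using hf.hasFDerivAt
      have h3 := h2.comp_hasDerivAt (0 : ℝ) h1
      rw [InnerProductSpace.toDual_apply_apply] at h3
      exact h3
    have hφ := ((hline (-x + r • u)).sub (hline (-x))).tendsto_slope_zero_right
    have hlim : ⟪g, -x + r • u⟫ - ⟪g, -x⟫ ≤ G * (r * ‖u‖) := by
      refine le_of_tendsto hφ ?_
      filter_upwards [Ioo_mem_nhdsGT (zero_lt_one' ℝ)] with t ht
      have ha : x + t • (-x + r • u) ∈ S := by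
        have hru : r • u ∈ S := hball (by
          rw [mem_closedBall_zero_iff, norm_smul, Real.norm_of_nonneg hr.le]
          nlinarith)
        have := hS hx hru (sub_nonneg.2 ht.2.le) ht.1.le (by ring)
        convert this using 1
        module
      have hb : x + t • (-x) ∈ S := by
        have h0 : (0 : E) ∈ S := hball (by simpa using hr.le)
        have := hS hx h0 (sub_nonneg.2 ht.2.le) ht.1.le (by ring)
        convert this using 1
        module
      have hl := (le_abs_self _).trans (hlip _ ha _ hb)
      have hn : ‖x + t • (-x + r • u) - (x + t • (-x))‖ = t * (r * ‖u‖) := by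
        have : x + t • (-x + r • u) - (x + t • (-x)) = t • (r • u) := by module
        rw [this, norm_smul, norm_smul, Real.norm_of_nonneg ht.1.le, Real.norm_of_nonneg hr.le]
      rw [hn] at hl
      simp only [Pi.sub_apply, zero_add, zero_smul, add_zero, sub_self, sub_zero, smul_eq_mul]
      rw [inv_mul_le_iff₀ ht.1]
      linarith
    rw [inner_add_right, inner_smul_right] at hlim
    have : r * ⟪g, u⟫ ≤ r * (G * ‖u‖) := by linarith
    exact le_of_mul_le_mul_left this hr
  by_cases hg : g = 0
  · obtain ⟨v, hv⟩ := exists_ne (0 : E)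
    have hv' : 0 < ‖v‖ := norm_pos_iff.2 hv
    have := key (‖v‖⁻¹ • v) (by rw [norm_smul, norm_inv, norm_norm, inv_mul_cancel₀ hv'.ne'])
    rw [norm_smul, norm_inv, norm_norm, inv_mul_cancel₀ hv'.ne', hg, inner_zero_left] at this
    simpa [hg] using this
  · have hv' : 0 < ‖g‖ := norm_pos_iff.2 hg
    have hn : ‖‖g‖⁻¹ • g‖ = 1 := by rw [norm_smul, norm_inv, norm_norm, inv_mul_cancel₀ hv'.ne']
    have := key (‖g‖⁻¹ • g) hn.le
    rw [hn, inner_smul_right, real_inner_self_eq_norm_sq] at this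
    field_simp at this
    linarith

/-! ### Minimisers of the surrogate losses -/

/-- The regularised linear function `y ↦ ⟪z, y⟫ + (a / 2) ‖y‖² + h ‖y - p‖²`. -/
noncomputable def surrogate (z : E) (a h : ℝ) (p y : E) : ℝ :=
  ⟪z, y⟫ + a / 2 * ‖y‖ ^ 2 + h * ‖y - p‖ ^ 2

/-- Quadratic growth of the surrogate around its constrained minimiser, coming from its
`(a + 2h)`-strong convexity. On segments the latter is an exact identity, so `a` may have any sign. -/
theorem surrogate_growth {S : Set E} (hS : Convex ℝ S) {z p y₀ y : E} {a h : ℝ}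
    (hy₀ : y₀ ∈ S) (hmin : ∀ w ∈ S, surrogate z a h p y₀ ≤ surrogate z a h p w) (hy : y ∈ S) :
    (a + 2 * h) / 2 * ‖y - y₀‖ ^ 2 ≤ surrogate z a h p y - surrogate z a h p y₀ := by
  -- compare `y₀` with the point at parameter `t` on the segment to `y`, then let `t → 0`
  have hstep : ∀ t ∈ Set.Ioo (0 : ℝ) 1, (1 - t) * ((a + 2 * h) / 2 * ‖y - y₀‖ ^ 2) ≤
      surrogate z a h p y - surrogate z a h p y₀ := by
    intro t ht
    have hm := hmin _ (hS hy₀ hy (sub_nonneg.2 ht.2.le) ht.1.le (by ring))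
    have hid : surrogate z a h p ((1 - t) • y₀ + t • y) =
        (1 - t) * surrogate z a h p y₀ + t * surrogate z a h p y -
          t * (1 - t) * ((a + 2 * h) / 2 * ‖y - y₀‖ ^ 2) := by
      unfold surrogate
      simp only [← real_inner_self_eq_norm_sq, inner_add_left, inner_add_right, inner_sub_left,
        inner_sub_right, inner_smul_left, inner_smul_right, RCLike.conj_to_real]
      rw [real_inner_comm y₀ y, real_inner_comm p y, real_inner_comm p y₀]
      ring
    rw [hid] at hm
    have : t * ((1 - t) * ((a + 2 * h) / 2 * ‖y - y₀‖ ^ 2)) ≤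
        t * (surrogate z a h p y - surrogate z a h p y₀) := by linarith
    exact le_of_mul_le_mul_left this ht.1
  have hlim : Filter.Tendsto (fun t : ℝ => (1 - t) * ((a + 2 * h) / 2 * ‖y - y₀‖ ^ 2))
      (nhdsWithin 0 (Set.Ioi 0)) (nhds ((1 - 0) * ((a + 2 * h) / 2 * ‖y - y₀‖ ^ 2))) := by
    apply Filter.Tendsto.mono_left _ nhdsWithin_le_nhds
    exact Continuous.tendsto (by fun_prop) 0
  have := le_of_tendsto hlim (by
    filter_upwards [Ioo_mem_nhdsGT (zero_lt_one' ℝ)] with t ht using hstep t ht)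
  simpa using this

theorem exists_surrogate_min {S : Set E} (hS : IsCompact S) (hne : S.Nonempty) (z p : E)
    (a h : ℝ) : ∃ y ∈ S, ∀ w ∈ S, surrogate z a h p y ≤ surrogate z a h p w := by
  have hc : Continuous (surrogate z a h p) := by unfold surrogate; fun_prop
  obtain ⟨y, hy, hmin⟩ := hS.exists_isMinOn hne hc.continuousOn
  exact ⟨y, hy, fun w hw => hmin hw⟩

/-- The constrained minimiser of the surrogate is Lipschitz in the dual variable `z`. -/
theorem dist_surrogate_min_le {S : Set E} (hS : Convex ℝ S) {z z' p y y' : E} {a h : ℝ}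
    (hc : 0 < a + 2 * h) (hy : y ∈ S) (hy' : y' ∈ S)
    (hmin : ∀ w ∈ S, surrogate z a h p y ≤ surrogate z a h p w)
    (hmin' : ∀ w ∈ S, surrogate z' a h p y' ≤ surrogate z' a h p w) :
    ‖y - y'‖ ≤ ‖z - z'‖ / (a + 2 * h) := by
  have h1 := surrogate_growth hS hy hmin hy'
  have h2 := surrogate_growth hS hy' hmin' hy
  have h3 : surrogate z a h p y' - surrogate z a h p y +
      (surrogate z' a h p y - surrogate z' a h p y') = ⟪z - z', y' - y⟫ := by
    unfold surrogate
    simp only [inner_sub_left, inner_sub_right]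
    ring
  have h4 := real_inner_le_norm (z - z') (y' - y)
  rw [norm_sub_rev y' y] at h1 h4
  rw [le_div_iff₀ hc]
  by_cases h0 : ‖y - y'‖ = 0
  · rw [h0, zero_mul]; exact norm_nonneg _
  · have hp : 0 < ‖y - y'‖ := lt_of_le_of_ne (norm_nonneg _) (Ne.symm h0)
    have : ‖y - y'‖ * (‖y - y'‖ * (a + 2 * h)) ≤ ‖y - y'‖ * ‖z - z'‖ := by nlinarith
    exact le_of_mul_le_mul_left this hp

theorem dist_le_of_approx_min {S : Set E} (hS : Convex ℝ S) {z p y x : E} {a h ε : ℝ}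
    (hc : 0 < a + 2 * h) (hy : y ∈ S) (hx : x ∈ S)
    (hmin : ∀ w ∈ S, surrogate z a h p y ≤ surrogate z a h p w)
    (hε : surrogate z a h p x - surrogate z a h p y ≤ ε) :
    ‖x - y‖ ≤ Real.sqrt (2 * ε / (a + 2 * h)) := by
  have h1 := surrogate_growth hS hy hmin hx
  apply Real.le_sqrt_of_sq_le
  rw [le_div_iff₀ hc]
  linarith

/-! ### Delayed follow-the-regularised-leader -/

/-- Regret of follow-the-regularised-leader for the losses `⟪δ m, ·⟫ + (a / 2) ‖·‖²` when the decision
in step `m` is the regularised leader `y (m - 1)`, which has not seen losses `m - 1` and `m`. The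
leader `y (m + 1)`, which has seen loss `m`, has regret at most `h ‖u - p‖²`, and the decision is
two moves away from it, each move being `O(L / curvature)`. The `max` handles `m = 1`, where the
decision is `y 1`. -/
theorem delayed_ftrl {S : Set E} (hS : Convex ℝ S) {R L a h : ℝ} (ha : 0 ≤ a) (hh : 0 < h)
    (hSR : S ⊆ Metric.closedBall 0 R) {p : E} (hp : p ∈ S) (B : ℕ) (z δ y : ℕ → E)
    (hz1 : z 1 = 0) (hz : ∀ m ∈ Finset.Icc 1 B, z (m + 1) = z m + δ m)
    (hδ : ∀ m ∈ Finset.Icc 1 B, ‖δ m‖ + a * R ≤ L) (hyS : ∀ m, y m ∈ S)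
    (hy : ∀ m, ∀ w ∈ S, surrogate (z m) (((m : ℝ) - 1) * a) h p (y m) ≤
      surrogate (z m) (((m : ℝ) - 1) * a) h p w) {u : E} (hu : u ∈ S) :
    ∑ m ∈ Finset.Icc 1 B, (⟪δ m, y (max (m - 1) 1) - u⟫ +
        a / 2 * (‖y (max (m - 1) 1)‖ ^ 2 - ‖u‖ ^ 2)) ≤
      ∑ m ∈ Finset.Icc 1 B, 4 * L ^ 2 / ((m : ℝ) * a + 2 * h) + 4 * h * R ^ 2 := by
  have hnorm : ∀ w ∈ S, ‖w‖ ≤ R := fun w hw => by simpa using hSR hw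
  set l : ℕ → E → ℝ := fun m w => ⟪δ m, w⟫ + a / 2 * ‖w‖ ^ 2 with hl
  have hstep : ∀ m ∈ Finset.Icc 1 B, ∀ w,
      surrogate (z (m + 1)) ((((m + 1 : ℕ) : ℝ) - 1) * a) h p w =
        surrogate (z m) (((m : ℝ) - 1) * a) h p w + l m w := by
    intro m hm w
    simp only [surrogate, hl, hz m hm, inner_add_left]
    push_cast
    ring
  have hlip : ∀ m ∈ Finset.Icc 1 B, ∀ v ∈ S, ∀ w ∈ S, l m v - l m w ≤ L * ‖v - w‖ := by
    intro m hm v hv w hw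
    have h1 : l m v - l m w = ⟪δ m, v - w⟫ + a / 2 * (‖v‖ ^ 2 - ‖w‖ ^ 2) := by
      simp only [hl, inner_sub_right]; ring
    have h2 := real_inner_le_norm (δ m) (v - w)
    have h3 : ‖v‖ - ‖w‖ ≤ ‖v - w‖ := norm_sub_norm_le v w
    have h4 : ‖v‖ ^ 2 - ‖w‖ ^ 2 ≤ 2 * R * ‖v - w‖ := by
      have := hnorm v hv; have := hnorm w hw
      have := norm_nonneg v; have := norm_nonneg w; have := norm_nonneg (v - w)
      calc ‖v‖ ^ 2 - ‖w‖ ^ 2 = (‖v‖ + ‖w‖) * (‖v‖ - ‖w‖) := by ring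
        _ ≤ (‖v‖ + ‖w‖) * ‖v - w‖ := by gcongr
        _ ≤ 2 * R * ‖v - w‖ := by gcongr; linarith
    have h5 := mul_le_mul_of_nonneg_left h4 (by positivity : 0 ≤ a / 2)
    have h6 := mul_le_mul_of_nonneg_right (hδ m hm) (norm_nonneg (v - w))
    rw [h1]; linarith
  have hc : ∀ m : ℕ, 0 < (m : ℝ) * a + 2 * h := fun m => by positivity
  have hmove : ∀ m ∈ Finset.Icc 1 B, ‖y m - y (m + 1)‖ ≤ 2 * L / ((m : ℝ) * a + 2 * h) := by
    intro m hm
    have h1 := surrogate_growth hS (hyS (m + 1)) (hy (m + 1)) (hyS m)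
    rw [hstep m hm, hstep m hm] at h1
    have h2 := hy m _ (hyS (m + 1))
    have h3 := hlip m hm _ (hyS m) _ (hyS (m + 1))
    have hcm := hc m
    rw [le_div_iff₀ hcm]
    push_cast at h1
    rcases (norm_nonneg (y m - y (m + 1))).eq_or_lt with h0 | h0
    · rw [← h0]
      have : 0 ≤ L := le_trans (by
        have := (norm_nonneg p).trans (hnorm p hp); positivity) (hδ m hm)
      linarith
    · refine le_of_mul_le_mul_left ?_ h0
      nlinarith
  -- be-the-leader: playing the next leader costs no more than the best regularised total
  have hlead : ∀ k ≤ B, ∑ m ∈ Finset.Icc 1 k, l m (y (m + 1)) ≤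
      surrogate (z (k + 1)) ((((k + 1 : ℕ) : ℝ) - 1) * a) h p (y (k + 1)) := by
    intro k
    induction k with
    | zero =>
      intro _
      simp only [surrogate, zero_add, hz1]
      simp
      positivity
    | succ k ih =>
      intro hk
      rw [Finset.sum_Icc_succ_top (by omega), hstep (k + 1) (by simp; omega)]
      linarith [ih (by omega), hy (k + 1) _ (hyS (k + 1 + 1))]
  have hsurr : ∀ k ≤ B, surrogate (z (k + 1)) ((((k + 1 : ℕ) : ℝ) - 1) * a) h p u =
      ∑ m ∈ Finset.Icc 1 k, l m u + h * ‖u - p‖ ^ 2 := by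
    intro k
    induction k with
    | zero =>
      intro _
      simp only [surrogate, zero_add, hz1]
      simp
    | succ k ih =>
      intro hk
      rw [Finset.sum_Icc_succ_top (by omega), hstep (k + 1) (by simp; omega), ih (by omega)]
      ring
  have hbtl : ∑ m ∈ Finset.Icc 1 B, l m (y (m + 1)) ≤
      ∑ m ∈ Finset.Icc 1 B, l m u + 4 * h * R ^ 2 := by
    have h1 := (hlead B le_rfl).trans (hy (B + 1) u hu)
    rw [hsurr B le_rfl] at h1
    have h2 : ‖u - p‖ ^ 2 ≤ (2 * R) ^ 2 := by
      gcongr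
      linarith [norm_sub_le u p, hnorm u hu, hnorm p hp]
    nlinarith
  have hL : ∀ m ∈ Finset.Icc 1 B, 0 ≤ L := fun m hm => le_trans (by
        have := (norm_nonneg p).trans (hnorm p hp); positivity) (hδ m hm)
  -- the delayed minimiser lags by two steps, the first of which is void when `m = 1`
  -- the extra summand on the left keeps the last move in reserve for the next decision
  have hlag : ∀ k ≤ B, ∑ m ∈ Finset.Icc 1 k, (l m (y (max (m - 1) 1)) - l m (y (m + 1))) +
        (if k = 0 then 0 else 2 * L ^ 2 / ((k : ℝ) * a + 2 * h)) ≤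
      ∑ m ∈ Finset.Icc 1 k, 4 * L ^ 2 / ((m : ℝ) * a + 2 * h) := by
    intro k
    induction k with
    | zero => intro _; simp
    | succ k ih =>
      intro hk
      have hm : k + 1 ∈ Finset.Icc 1 B := by simp; omega
      have hL0 := hL _ hm
      rw [Finset.sum_Icc_succ_top (by omega), Finset.sum_Icc_succ_top (by omega)]
      have ih' := ih (by omega)
      have h1 := hlip _ hm _ (hyS (max (k + 1 - 1) 1)) _ (hyS (k + 1 + 1))
      have h2 := hmove _ hm
      have h2' := mul_le_mul_of_nonneg_left h2 hL0
      have e1 : L * (2 * L / (((k + 1 : ℕ) : ℝ) * a + 2 * h)) =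
        2 * L ^ 2 / (((k + 1 : ℕ) : ℝ) * a + 2 * h) := by ring
      have e2 : 4 * L ^ 2 / (((k + 1 : ℕ) : ℝ) * a + 2 * h) =
        2 * (2 * L ^ 2 / (((k + 1 : ℕ) : ℝ) * a + 2 * h)) := by ring
      rw [if_neg (by omega), e2]
      rcases Nat.eq_zero_or_pos k with rfl | hk0
      · simp only [if_true] at ih'
        simp only [zero_add, Nat.sub_self, zero_le, sup_of_le_right] at *
        linarith
      · rw [if_neg (by omega)] at ih'
        have hmax : max (k + 1 - 1) 1 = k := by omega
        rw [hmax] at h1 ⊢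
        have h3 := mul_le_mul_of_nonneg_left (hmove k (by simp; omega)) hL0
        have e3 : L * (2 * L / ((k : ℝ) * a + 2 * h)) =
          2 * L ^ 2 / ((k : ℝ) * a + 2 * h) := by ring
        have h4 := mul_le_mul_of_nonneg_left
          (norm_sub_le_norm_sub_add_norm_sub (y k) (y (k + 1)) (y (k + 1 + 1))) hL0
        linarith
  have hlagB := hlag B le_rfl
  have hnn : 0 ≤ (if B = 0 then 0 else 2 * L ^ 2 / ((B : ℝ) * a + 2 * h)) := by
    have := hc B
    split_ifs <;> positivity
  have hfin : ∑ m ∈ Finset.Icc 1 B, (⟪δ m, y (max (m - 1) 1) - u⟫ +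
        a / 2 * (‖y (max (m - 1) 1)‖ ^ 2 - ‖u‖ ^ 2)) =
      ∑ m ∈ Finset.Icc 1 B, (l m (y (max (m - 1) 1)) - l m (y (m + 1))) +
        (∑ m ∈ Finset.Icc 1 B, l m (y (m + 1)) - ∑ m ∈ Finset.Icc 1 B, l m u) := by
    rw [← Finset.sum_sub_distrib, ← Finset.sum_add_distrib]
    refine Finset.sum_congr rfl fun m _ => ?_
    simp only [hl, inner_sub_right]
    ring
  rw [hfin]
  linarith

/-! ### Consensus error of the dual variables -/

/-- The operator norm of `M` on `ℝⁿ` also bounds the action of `M` on `n`-tuples of vectors with the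
Euclidean norm of the stack, since `M` acts coordinatewise. -/
theorem norm_stack_mulVec_le {n d : ℕ} (M : Matrix (Fin n) (Fin n) ℝ)
    (w : Fin n → EuclideanSpace ℝ (Fin d)) :
    ‖WithLp.toLp 2 (fun i => ∑ j, M i j • w j)‖ ≤
      ‖Matrix.toEuclideanCLM (𝕜 := ℝ) (n := Fin n) M‖ * ‖WithLp.toLp 2 w‖ := by
  set s := ‖Matrix.toEuclideanCLM (𝕜 := ℝ) (n := Fin n) M‖ with hs
  refine le_of_sq_le_sq ?_ (by positivity)
  rw [mul_pow, PiLp.norm_sq_eq_of_L2, PiLp.norm_sq_eq_of_L2]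
  simp only [EuclideanSpace.real_norm_sq_eq]
  rw [Finset.sum_comm, Finset.sum_comm (f := fun i k => (w i) k ^ 2), Finset.mul_sum]
  refine Finset.sum_le_sum fun k _ => ?_
  have h := (Matrix.toEuclideanCLM (𝕜 := ℝ) (n := Fin n) M).le_opNorm
    (WithLp.toLp 2 (fun j => w j k))
  have h2 := pow_le_pow_left₀ (norm_nonneg _) h 2
  rw [mul_pow, EuclideanSpace.real_norm_sq_eq, EuclideanSpace.real_norm_sq_eq] at h2
  simpa [Matrix.mulVec, dotProduct] using h2

/-- Subtracting the mean is a contraction of the stacked Euclidean norm. -/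
theorem norm_stack_sub_mean_le {n : ℕ} (w : Fin n → E) {D : ℝ} (hD : ∀ i, ‖w i‖ ≤ D) :
    ‖WithLp.toLp 2 (fun i => w i - (n : ℝ)⁻¹ • ∑ j, w j)‖ ≤ Real.sqrt n * D := by
  rcases Nat.eq_zero_or_pos n with rfl | hn
  · simp [PiLp.norm_eq_of_L2]
  have hn' : (n : ℝ) ≠ 0 := by positivity
  have hD0 : 0 ≤ D := (norm_nonneg _).trans (hD ⟨0, hn⟩)
  refine le_of_sq_le_sq ?_ (by positivity)
  rw [mul_pow, Real.sq_sqrt (Nat.cast_nonneg n), PiLp.norm_sq_eq_of_L2]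
  set c := (n : ℝ)⁻¹ • ∑ j, w j with hc
  have hsum : ∑ j, w j = (n : ℝ) • c := by rw [hc, smul_inv_smul₀ hn']
  have hid : ∑ i, ‖w i - c‖ ^ 2 = ∑ i, ‖w i‖ ^ 2 - n * ‖c‖ ^ 2 := by
    simp only [norm_sub_sq_real, Finset.sum_add_distrib, Finset.sum_sub_distrib,
      ← Finset.mul_sum, ← sum_inner, hsum, inner_smul_left, real_inner_self_eq_norm_sq]
    simp
    ring
  have hle : ∑ i, ‖w i‖ ^ 2 ≤ ∑ _i : Fin n, D ^ 2 :=
    Finset.sum_le_sum fun i _ => pow_le_pow_left₀ (norm_nonneg _) (hD i) 2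
  simp only [Finset.sum_const, Finset.card_univ, Fintype.card_fin, nsmul_eq_mul] at hle
  simp only [hid]
  have : 0 ≤ (n : ℝ) * ‖c‖ ^ 2 := by positivity
  linarith

/-- Mixing by a column-stochastic matrix preserves the mean. -/
theorem mean_step {n : ℕ} {P : Matrix (Fin n) (Fin n) ℝ} (hcol : ∀ j, ∑ i, P i j = 1)
    (z δ : Fin n → E) :
    (n : ℝ)⁻¹ • ∑ i, ((∑ j, P i j • z j) + δ i) =
      (n : ℝ)⁻¹ • ∑ i, z i + (n : ℝ)⁻¹ • ∑ i, δ i := by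
  rw [Finset.sum_add_distrib, Finset.sum_comm, smul_add]
  simp only [← Finset.sum_smul, hcol, one_smul]

/-- Under gossip averaging with perturbations of norm at most `D`, the stacked deviation from the mean
satisfies `e (m + 1) ≤ σ e m + √n D`, hence stays below the fixed point `√n D / (1 - σ)`. -/
theorem consensus_error {n d B : ℕ} (hn : 1 ≤ n) {P : Matrix (Fin n) (Fin n) ℝ}
    (hrow : ∀ i, ∑ j, P i j = 1) (hcol : ∀ j, ∑ i, P i j = 1) {σ D : ℝ}
    (hσ : σ = ‖Matrix.toEuclideanCLM (𝕜 := ℝ) (n := Fin n)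
      (P - Matrix.of fun _ _ => (n : ℝ)⁻¹)‖) (hσlt : σ < 1)
    (z δ : Fin n → ℕ → EuclideanSpace ℝ (Fin d)) (hz1 : ∀ i, z i 1 = 0)
    (hz : ∀ i, ∀ m ∈ Finset.Icc 1 B, z i (m + 1) = (∑ j, P i j • z j m) + δ i m)
    (hδ : ∀ i, ∀ m ∈ Finset.Icc 1 B, ‖δ i m‖ ≤ D) (hD : 0 ≤ D) (i : Fin n) :
    ∀ m ∈ Finset.Icc 1 (B + 1),
      ‖z i m - (n : ℝ)⁻¹ • ∑ j, z j m‖ ≤ Real.sqrt n * D / (1 - σ) := by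
  have hn' : (n : ℝ) ≠ 0 := by positivity
  have h1σ : 0 < 1 - σ := sub_pos.2 hσlt
  have hσ0 : 0 ≤ σ := hσ ▸ norm_nonneg _
  have hstack : ∀ k ≤ B, ‖WithLp.toLp 2 (fun i => z i (k + 1) - (n : ℝ)⁻¹ • ∑ j, z j (k + 1))‖ ≤
      Real.sqrt n * D / (1 - σ) := by
    intro k
    induction k with
    | zero =>
      intro _
      have : (fun i => z i (0 + 1) - (n : ℝ)⁻¹ • ∑ j, z j (0 + 1)) = 0 := by
        funext i; simp [hz1]
      rw [this, WithLp.toLp_zero, norm_zero]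
      positivity
    | succ k ih =>
      intro hk
      have hm : k + 1 ∈ Finset.Icc 1 B := by simp; omega
      set c := (n : ℝ)⁻¹ • ∑ j, z j (k + 1) with hc
      have hsum : ∑ j, z j (k + 1) = (n : ℝ) • c := by rw [hc, smul_inv_smul₀ hn']
      have hmean : (n : ℝ)⁻¹ • ∑ j, z j (k + 1 + 1) = c + (n : ℝ)⁻¹ • ∑ j, δ j (k + 1) := by
        rw [hc, ← mean_step hcol]
        simp only [hz _ _ hm]
      -- with `J` the matrix of entries `1/n`, `(P - J) (z - c) = P z - c`
      have hdev : WithLp.toLp 2 (fun i => z i (k + 1 + 1) - (n : ℝ)⁻¹ • ∑ j, z j (k + 1 + 1)) =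
          WithLp.toLp 2 (fun i => ∑ j, (P - Matrix.of fun _ _ => (n : ℝ)⁻¹ : Matrix (Fin n) (Fin n) ℝ)
            i j • (z j (k + 1) - c)) +
          WithLp.toLp 2 (fun i => δ i (k + 1) - (n : ℝ)⁻¹ • ∑ j, δ j (k + 1)) := by
        rw [← WithLp.toLp_add]
        congr 1
        funext i
        have : ∑ j, (P - Matrix.of fun _ _ => (n : ℝ)⁻¹ : Matrix (Fin n) (Fin n) ℝ) i j •
            (z j (k + 1) - c) =
            ∑ j, P i j • z j (k + 1) - c := by
          simp only [Matrix.sub_apply, Matrix.of_apply, sub_smul, smul_sub,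
            Finset.sum_sub_distrib, ← Finset.sum_smul, ← Finset.smul_sum, hrow, hsum]
          simp [hn']
        rw [Pi.add_apply, this, hmean, hz i _ hm]
        abel
      rw [hdev]
      refine (norm_add_le _ _).trans ?_
      have h1 := norm_stack_mulVec_le (P - Matrix.of fun _ _ => (n : ℝ)⁻¹)
        (fun j => z j (k + 1) - c)
      rw [← hσ] at h1
      have h2 := norm_stack_sub_mean_le (fun i => δ i (k + 1)) (fun i => hδ i _ hm)
      have h3 := mul_le_mul_of_nonneg_left (ih (by omega)) hσ0
      have h4 : σ * (Real.sqrt n * D / (1 - σ)) + Real.sqrt n * D =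
          Real.sqrt n * D / (1 - σ) := by
        field_simp; ring
      linarith
  intro m hm
  rw [Finset.mem_Icc] at hm
  obtain ⟨k, rfl⟩ := Nat.exists_eq_add_of_le' hm.1
  exact (PiLp.norm_apply_le (WithLp.toLp 2
    (fun i => z i (k + 1) - (n : ℝ)⁻¹ • ∑ j, z j (k + 1))) i).trans (hstack k (by omega))

/-! ### Reduction of the regret to block losses -/

theorem sum_blocks (φ : ℕ → ℝ) (B K : ℕ) :
    ∑ t ∈ Finset.Icc 1 (B * K), φ t =
      ∑ m ∈ Finset.Icc 1 B, ∑ t ∈ Finset.Icc ((m - 1) * K + 1) (m * K), φ t := by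
  induction B with
  | zero => simp
  | succ B ih =>
    rw [Finset.sum_Icc_succ_top (by omega), ← ih, Nat.add_sub_cancel]
    have h : ∀ N, Finset.Icc 1 N = Finset.Ioc 0 N := fun N => by ext; simp; omega
    have h' : Finset.Icc (B * K + 1) ((B + 1) * K) = Finset.Ioc (B * K) ((B + 1) * K) := by
      ext; simp
    rw [h, h, h', Finset.sum_Ioc_consecutive _ (Nat.zero_le _) (Nat.mul_le_mul_right _ (by omega))]

/-- One loss in one round: the play `xi` of the learner under study is compared with the play `xj` of
the learner owning the loss, and then both with a reference point `c`. Strong convexity at `xj`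
turns the rest into the difference at `c` and `u` of the quadratic loss
`⟪g - α xj, ·⟫ + (α / 2) ‖·‖²`. -/
theorem round_regret_le {S : Set E} {G α : ℝ} (hα : 0 ≤ α) {f : E → ℝ} {g xi xj c u : E}
    (hxi : xi ∈ S) (hxj : xj ∈ S) (hg : ‖g‖ ≤ G)
    (hlip : ∀ a ∈ S, ∀ b ∈ S, |f a - f b| ≤ G * ‖a - b‖)
    (hsc : f xj + ⟪g, u - xj⟫ + α / 2 * ‖u - xj‖ ^ 2 ≤ f u) :
    f xi - f u ≤ G * (‖xi - c‖ + 2 * ‖xj - c‖) + ⟪g, c - u⟫ - α * ⟪xj, c - u⟫ +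
      α / 2 * (‖c‖ ^ 2 - ‖u‖ ^ 2) := by
  have hG : 0 ≤ G := (norm_nonneg g).trans hg
  have h1 := (le_abs_self _).trans (hlip xi hxi xj hxj)
  have h2 := mul_le_mul_of_nonneg_left (norm_sub_le_norm_sub_add_norm_sub xi c xj) hG
  rw [norm_sub_rev c xj] at h2
  have h3 : ⟪g, xj - c⟫ ≤ G * ‖xj - c‖ :=
    (real_inner_le_norm _ _).trans (mul_le_mul_of_nonneg_right hg (norm_nonneg _))
  have h4 : ⟪g, u - xj⟫ = -⟪g, xj - c⟫ - ⟪g, c - u⟫ := by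
    simp only [inner_sub_right]; ring
  have h5 : ‖u - xj‖ ^ 2 = ‖xj - c‖ ^ 2 + 2 * ⟪xj, c - u⟫ - (‖c‖ ^ 2 - ‖u‖ ^ 2) := by
    simp only [← real_inner_self_eq_norm_sq, inner_sub_left, inner_sub_right]
    rw [real_inner_comm u xj, real_inner_comm c xj]
    ring
  have h6 : 0 ≤ α / 2 * ‖xj - c‖ ^ 2 := by positivity
  rw [h4, h5] at hsc
  linarith

end DBOCG

/-- Regret bound for D-BOCG (Theorem 1): in the distributed block online conditional
gradient setup with `α`-strongly convex `G`-Lipschitz losses, the regret of every local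
learner is bounded in terms of the surrogate-loss approximation errors `ε_m`. -/
theorem dbocg_regret_bound_with_approximation_errors
    (d n B K : ℕ) (hd : 1 ≤ d) (hn : 1 ≤ n) (hB : 1 ≤ B) (hK : 1 ≤ K)
    (T : ℕ) (hT : T = B * K)
    (Khat : Set (EuclideanSpace ℝ (Fin d)))
    (hKconv : Convex ℝ Khat) (hKcomp : IsCompact Khat)
    (r R : ℝ) (hr : 0 < r) (hrR : r ≤ R)
    (hballin : Metric.closedBall 0 r ⊆ Khat)
    (hballout : Khat ⊆ Metric.closedBall 0 R)
    (G α : ℝ) (hα : 0 ≤ α)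
    (f : ℕ → Fin n → EuclideanSpace ℝ (Fin d) → ℝ)
    (f' : ℕ → Fin n → EuclideanSpace ℝ (Fin d) → EuclideanSpace ℝ (Fin d))
    (hdiff : ∀ t i x, HasGradientAt (f t i) (f' t i x) x)
    (hlip : ∀ t ∈ Finset.Icc 1 T, ∀ (i : Fin n), ∀ x ∈ Khat, ∀ y ∈ Khat,
      |f t i x - f t i y| ≤ G * ‖x - y‖)
    (hsc : ∀ t ∈ Finset.Icc 1 T, ∀ (i : Fin n), ∀ x ∈ Khat, ∀ y ∈ Khat,
      f t i x + ⟪f' t i x, y - x⟫ + α / 2 * ‖y - x‖ ^ 2 ≤ f t i y)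
    (P : Matrix (Fin n) (Fin n) ℝ)
    (hpos : ∀ i j, 0 ≤ P i j) (hsymm : P.IsSymm)
    (hrow : ∀ i, ∑ j, P i j = 1) (hcol : ∀ j, ∑ i, P i j = 1)
    (σ : ℝ)
    (hσ : σ = ‖Matrix.toEuclideanCLM (𝕜 := ℝ) (n := Fin n)
      (P - Matrix.of fun _ _ => (n : ℝ)⁻¹)‖)
    (hσlt : σ < 1)
    (h : ℝ) (hh : 0 < h)
    (xin : EuclideanSpace ℝ (Fin d)) (hxin : xin ∈ Khat)
    (x : Fin n → ℕ → EuclideanSpace ℝ (Fin d))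
    (hx1 : ∀ i, x i 1 = xin)
    (hxK : ∀ (i : Fin n), ∀ m ∈ Finset.Icc 1 B, x i m ∈ Khat)
    (ghat : Fin n → ℕ → EuclideanSpace ℝ (Fin d))
    (hghat : ∀ (i : Fin n), ∀ m ∈ Finset.Icc 1 B,
      ghat i m = ∑ t ∈ Finset.Icc ((m - 1) * K + 1) (m * K), f' t i (x i m))
    (z : Fin n → ℕ → EuclideanSpace ℝ (Fin d))
    (hz1 : ∀ i, z i 1 = 0)
    (hzrec : ∀ (i : Fin n), ∀ m ∈ Finset.Icc 1 B,
      z i (m + 1) = (∑ j, P i j • z j m) + ghat i m - (α * (K : ℝ)) • x i m)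
    (F : ℕ → Fin n → EuclideanSpace ℝ (Fin d) → ℝ)
    (hF : ∀ (m : ℕ) (i : Fin n) (y : EuclideanSpace ℝ (Fin d)),
      F m i y = ⟪z i m, y⟫ + ((m : ℝ) - 1) * α * K / 2 * ‖y‖ ^ 2 + h * ‖y - xin‖ ^ 2)
    (ε : ℕ → ℝ)
    (hε : ∀ m ∈ Finset.Icc 2 B, ∀ (i : Fin n), ∀ y ∈ Khat,
      F (m - 1) i (x i m) - F (m - 1) i y ≤ ε m) :
    ∀ (i : Fin n), ∀ xstar ∈ Khat,
      (∑ m ∈ Finset.Icc 1 B, ∑ t ∈ Finset.Icc ((m - 1) * K + 1) (m * K),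
          ∑ j, f t j (x i m)) -
        (∑ t ∈ Finset.Icc 1 T, ∑ j, f t j xstar) ≤
      3 * n * G * K * (∑ m ∈ Finset.Icc 2 B,
          Real.sqrt (2 * ε m / (((m : ℝ) - 2) * α * K + 2 * h))) +
      3 * n * G * K * (∑ m ∈ Finset.Icc 2 B,
          K * (G + α * R) * Real.sqrt n / ((((m : ℝ) - 2) * α * K + 2 * h) * (1 - σ))) +
      n * (∑ m ∈ Finset.Icc 1 B,
          4 * (K : ℝ) ^ 2 * (G + 2 * α * R) ^ 2 / ((m : ℝ) * α * K + 2 * h)) +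
      4 * n * h * R ^ 2 := by
  intro i u hu
  have : Nonempty (Fin d) := ⟨⟨0, hd⟩⟩
  have hR : 0 ≤ R := hr.le.trans hrR
  have hblock : ∀ m ∈ Finset.Icc 1 B, ∀ t ∈ Finset.Icc ((m - 1) * K + 1) (m * K),
      t ∈ Finset.Icc 1 T := by
    intro m hm t ht
    simp only [Finset.mem_Icc] at *
    have : m * K ≤ B * K := Nat.mul_le_mul_right _ hm.2
    omega
  have hcard : ∀ m ∈ Finset.Icc 1 B,
      (Finset.Icc ((m - 1) * K + 1) (m * K)).card = K := by
    intro m hm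
    obtain ⟨k, rfl⟩ := Nat.exists_eq_add_of_le' (Finset.mem_Icc.1 hm).1
    simp [Nat.add_mul]
  have hgrad : ∀ m ∈ Finset.Icc 1 B, ∀ t ∈ Finset.Icc ((m - 1) * K + 1) (m * K), ∀ j,
      ‖f' t j (x j m)‖ ≤ G := fun m hm t ht j =>
    DBOCG.norm_gradient_le hKconv hr hballin (hxK j m hm) (hdiff t j _)
      (hlip t (hblock m hm t ht) j)
  have hG : 0 ≤ G := by
    have h1 : 1 ∈ Finset.Icc 1 B := by simp [hB]
    exact (norm_nonneg _).trans (hgrad 1 h1 1 (by simp; omega) i)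
  set a : ℝ := α * K with ha_def
  have ha : 0 ≤ a := by positivity
  set δ : Fin n → ℕ → EuclideanSpace ℝ (Fin d) := fun j m => ghat j m - a • x j m with hδ_def
  set D : ℝ := K * (G + α * R) with hD_def
  have hD : 0 ≤ D := by positivity
  have hδ : ∀ j, ∀ m ∈ Finset.Icc 1 B, ‖δ j m‖ ≤ D := by
    intro j m hm
    have h1 : ‖ghat j m‖ ≤ K * G := by
      rw [hghat j m hm]
      refine (norm_sum_le_of_le _ fun t ht => hgrad m hm t ht j).trans_eq ?_
      rw [Finset.sum_const, hcard m hm, nsmul_eq_mul]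
    have h2 : ‖a • x j m‖ ≤ a * R := by
      rw [norm_smul, Real.norm_of_nonneg ha]
      exact mul_le_mul_of_nonneg_left (by simpa using hballout (hxK j m hm)) ha
    calc ‖δ j m‖ ≤ ‖ghat j m‖ + ‖a • x j m‖ := norm_sub_le _ _
      _ ≤ K * G + a * R := add_le_add h1 h2
      _ = D := by rw [hD_def, ha_def]; ring
  have hz : ∀ j, ∀ m ∈ Finset.Icc 1 B, z j (m + 1) = (∑ k, P j k • z k m) + δ j m := by
    intro j m hm
    rw [hzrec j m hm, add_sub_assoc]
  have hcons := DBOCG.consensus_error hn hrow hcol hσ hσlt z δ hz1 hz hδ hD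
  set zb : ℕ → EuclideanSpace ℝ (Fin d) := fun m => (n : ℝ)⁻¹ • ∑ j, z j m with hzb_def
  set δb : ℕ → EuclideanSpace ℝ (Fin d) := fun m => (n : ℝ)⁻¹ • ∑ j, δ j m with hδb_def
  have hn' : (n : ℝ) ≠ 0 := by positivity
  have hzb1 : zb 1 = 0 := by simp [hzb_def, hz1]
  have hzb : ∀ m ∈ Finset.Icc 1 B, zb (m + 1) = zb m + δb m := by
    intro m hm
    simp only [hzb_def, hδb_def]
    rw [← DBOCG.mean_step hcol]
    simp only [hz _ m hm]
  have hδb : ∀ m ∈ Finset.Icc 1 B, ‖δb m‖ + a * R ≤ K * (G + 2 * α * R) := by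
    intro m hm
    have h1 : ‖∑ j, δ j m‖ ≤ n * D := by
      refine (norm_sum_le_of_le _ fun j _ => hδ j m hm).trans_eq ?_
      simp
    have h2 : ‖δb m‖ ≤ D := by
      simp only [hδb_def]
      rw [norm_smul, norm_inv, Real.norm_natCast, inv_mul_le_iff₀ (by positivity)]
      exact h1
    calc ‖δb m‖ + a * R ≤ D + a * R := by gcongr
      _ = K * (G + 2 * α * R) := by rw [hD_def, ha_def]; ring
  choose y hyS hy using fun m : ℕ =>
    DBOCG.exists_surrogate_min hKcomp ⟨xin, hxin⟩ (zb m) xin (((m : ℝ) - 1) * a) h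
  have hftrl := DBOCG.delayed_ftrl hKconv ha hh hballout hxin B zb δb y hzb1 hzb hδb hyS hy hu
  have hFs : ∀ m j w, F m j w = DBOCG.surrogate (z j m) (((m : ℝ) - 1) * a) h xin w := by
    intro m j w
    rw [hF, DBOCG.surrogate, ha_def]
    ring
  -- distance of a learner's play from the leader of the averaged problem: approximation error plus
  -- consensus error over curvature; it vanishes in the first block
  set A : ℕ → ℝ := fun m => Real.sqrt (2 * ε m / (((m : ℝ) - 2) * α * K + 2 * h)) +
    K * (G + α * R) * Real.sqrt n / ((((m : ℝ) - 2) * α * K + 2 * h) * (1 - σ)) with hA_def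
  set A' : ℕ → ℝ := fun m => if m = 1 then 0 else A m with hA'_def
  have hdist : ∀ j, ∀ m ∈ Finset.Icc 1 B, ‖x j m - y (max (m - 1) 1)‖ ≤ A' m := by
    intro j m hm
    rw [Finset.mem_Icc] at hm
    rcases hm.1.eq_or_lt with rfl | hm1
    -- in the first block every play sits at `xin`, the unique minimiser of `h ‖y - xin‖²`
    · have h1 := DBOCG.surrogate_growth hKconv (hyS 1) (hy 1) hxin
      have h2 : 0 ≤ DBOCG.surrogate (zb 1) (((1 : ℕ) - 1 : ℝ) * a) h xin (y 1) := by
        simp only [DBOCG.surrogate, hzb1]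
        simp
        positivity
      have h3 : DBOCG.surrogate (zb 1) (((1 : ℕ) - 1 : ℝ) * a) h xin xin = 0 := by
        simp [DBOCG.surrogate, hzb1]
      have h4 : h * ‖xin - y 1‖ ^ 2 ≤ 0 := by
        have e : ((((1 : ℕ) : ℝ) - 1) * a + 2 * h) / 2 = h := by push_cast; ring
        rw [e] at h1
        linarith
      have h5 : ‖xin - y 1‖ ^ 2 ≤ 0 := nonpos_of_mul_nonpos_right h4 hh
      have h6 : ‖xin - y 1‖ = 0 := by
        have := sq_nonneg ‖xin - y 1‖
        exact pow_eq_zero_iff (two_ne_zero) |>.1 (le_antisymm h5 this)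
      simp [hx1, hA'_def, h6]
    · obtain ⟨k, rfl⟩ := Nat.exists_eq_add_of_le' hm1
      have hmB : k + 2 ∈ Finset.Icc 2 B := by simp; omega
      have hmax : max (k + 2 - 1) 1 = k + 1 := by omega
      have e : (((k + 1 : ℕ) : ℝ) - 1) * a + 2 * h =
          (((k + 2 : ℕ) : ℝ) - 2) * α * K + 2 * h := by rw [ha_def]; push_cast; ring
      have hc : 0 < (((k + 1 : ℕ) : ℝ) - 1) * a + 2 * h := by push_cast; simp; positivity
      obtain ⟨w, hwS, hw⟩ := DBOCG.exists_surrogate_min hKcomp ⟨xin, hxin⟩ (z j (k + 1)) xin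
        ((((k + 1 : ℕ) : ℝ) - 1) * a) h
      have hεw := hε (k + 2) hmB j w hwS
      rw [show k + 2 - 1 = k + 1 from rfl, hFs, hFs] at hεw
      have h1 := DBOCG.dist_le_of_approx_min hKconv hc hwS (hxK j (k + 2) (by simp; omega)) hw hεw
      have h2 := DBOCG.dist_surrogate_min_le hKconv hc hwS (hyS (k + 1)) hw (hy (k + 1))
      have h3 : ‖z j (k + 1) - zb (k + 1)‖ / ((((k + 1 : ℕ) : ℝ) - 1) * a + 2 * h) ≤
          Real.sqrt n * D / (1 - σ) / ((((k + 1 : ℕ) : ℝ) - 1) * a + 2 * h) :=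
        div_le_div_of_nonneg_right (hcons j (k + 1) (by simp; omega)) hc.le
      have h4 : Real.sqrt n * D / (1 - σ) / ((((k + 1 : ℕ) : ℝ) - 1) * a + 2 * h) =
          K * (G + α * R) * Real.sqrt n /
            ((((k + 1 : ℕ) : ℝ) - 1) * a + 2 * h) / (1 - σ) := by
        rw [hD_def]; ring
      rw [hmax]
      simp only [hA'_def, hA_def]
      rw [if_neg (by omega), ← e, ← div_div]
      linarith [norm_sub_le_norm_sub_add_norm_sub (x j (k + 2)) w (y (k + 1))]
  have hmain : ∀ m ∈ Finset.Icc 1 B,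
      (∑ t ∈ Finset.Icc ((m - 1) * K + 1) (m * K), ∑ j, f t j (x i m)) -
        (∑ t ∈ Finset.Icc ((m - 1) * K + 1) (m * K), ∑ j, f t j u) ≤
      3 * n * G * K * A' m + n * (⟪δb m, y (max (m - 1) 1) - u⟫ +
        a / 2 * (‖y (max (m - 1) 1)‖ ^ 2 - ‖u‖ ^ 2)) := by
    intro m hm
    set c := y (max (m - 1) 1) with hc
    have h1 : ∀ j, ∑ t ∈ Finset.Icc ((m - 1) * K + 1) (m * K), (f t j (x i m) - f t j u) ≤
        3 * G * K * A' m + ⟪δ j m, c - u⟫ + a / 2 * (‖c‖ ^ 2 - ‖u‖ ^ 2) := by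
      intro j
      have h2 : ∀ t ∈ Finset.Icc ((m - 1) * K + 1) (m * K), f t j (x i m) - f t j u ≤
          ⟪f' t j (x j m), c - u⟫ + (3 * G * A' m - α * ⟪x j m, c - u⟫ +
            α / 2 * (‖c‖ ^ 2 - ‖u‖ ^ 2)) := by
        intro t ht
        have htT := hblock m hm t ht
        have h3 := DBOCG.round_regret_le (c := c) hα (hxK i m hm) (hxK j m hm)
          (hgrad m hm t ht j) (hlip t htT j) (hsc t htT j _ (hxK j m hm) u hu)
        have h4 : ‖x i m - c‖ + 2 * ‖x j m - c‖ ≤ 3 * A' m := by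
          linarith [hdist i m hm, hdist j m hm]
        have h5 := mul_le_mul_of_nonneg_left h4 hG
        linarith
      refine (Finset.sum_le_sum h2).trans_eq ?_
      rw [Finset.sum_add_distrib, Finset.sum_const, hcard m hm, nsmul_eq_mul, ← sum_inner,
        ← hghat j m hm]
      simp only [hδ_def, inner_sub_left, real_inner_smul_left]
      rw [ha_def]
      ring
    rw [← Finset.sum_sub_distrib]
    simp only [← Finset.sum_sub_distrib]
    rw [Finset.sum_comm]
    refine (Finset.sum_le_sum fun j _ => h1 j).trans_eq ?_
    have h6 : ⟪δb m, c - u⟫ = (n : ℝ)⁻¹ * ∑ j, ⟪δ j m, c - u⟫ := by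
      simp only [hδb_def]
      rw [real_inner_smul_left, sum_inner]
    rw [h6, mul_add, mul_inv_cancel_left₀ hn']
    simp only [Finset.sum_add_distrib, Finset.sum_const, Finset.card_univ, Fintype.card_fin,
      nsmul_eq_mul]
    ring
  have hA : ∑ m ∈ Finset.Icc 1 B, A' m = ∑ m ∈ Finset.Icc 2 B, A m := by
    rw [← Finset.add_sum_Ioc_eq_sum_Icc hB]
    simp only [hA'_def, if_true, zero_add]
    refine Finset.sum_congr (by ext; simp; omega) fun m hm => if_neg ?_
    simp only [Finset.mem_Icc] at hm
    omega
  have htot := Finset.sum_le_sum hmain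
  rw [Finset.sum_sub_distrib, Finset.sum_add_distrib, ← Finset.mul_sum, ← Finset.mul_sum, hA,
    ← DBOCG.sum_blocks (fun t => ∑ j, f t j u), ← hT] at htot
  refine htot.trans ?_
  have h7 := mul_le_mul_of_nonneg_left hftrl (Nat.cast_nonneg (α := ℝ) n)
  have h8 : ∑ m ∈ Finset.Icc 1 B, 4 * (K * (G + 2 * α * R)) ^ 2 / ((m : ℝ) * a + 2 * h) =
      ∑ m ∈ Finset.Icc 1 B,
        4 * (K : ℝ) ^ 2 * (G + 2 * α * R) ^ 2 / ((m : ℝ) * α * K + 2 * h) := by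
    refine Finset.sum_congr rfl fun m _ => ?_
    rw [ha_def, mul_pow, ← mul_assoc, ← mul_assoc]
  rw [h8] at h7
  have h9 : ∑ m ∈ Finset.Icc 2 B, A m = (∑ m ∈ Finset.Icc 2 B,
      Real.sqrt (2 * ε m / (((m : ℝ) - 2) * α * K + 2 * h))) + ∑ m ∈ Finset.Icc 2 B,
      K * (G + α * R) * Real.sqrt n / ((((m : ℝ) - 2) * α * K + 2 * h) * (1 - σ)) := by
    simp only [hA_def, Finset.sum_add_distrib]
  rw [h9]
  linarith
end

section
/- Under the D-BOCG setup, suppose additionally that for each learner i and each block m ∈ {1,…,B−1}, x_i(m+1) = CG(K̂, L, F_{m,i}, x_i(m)) with L ≥ 1 conditional gradient iterations. Then for every learner i ∈ {1,…,n}, R_{T,i} ≤ 12nGRT/√(L+2) + Σ_{m=2}^B 3nGK²(G+αR)√n / (((m−2)αK + 2h)(1 − σ)) + Σ_{m=1}^B 4nK²(G+2αR)² / (mαK + 2h) + 4nhR². -/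
/-!
The regret is compared with a delayed follow-the-regularized-leader (FTRL) strategy run on the
averaged information of all learners.

Write `b = αK`, `d_j(m) = ĝ_j(m) − b x_j(m)`, let bars denote averages over the `n` learners, and
let `y(m)` minimize `F̄_m(x) = ⟪z̄(m), x⟫ + (m−1)b/2 ‖x‖² + h ‖x − x_in‖²` over `K̂`. Since `P` is
doubly stochastic, `z̄(m+1) = z̄(m) + d̄(m)`, so `F̄_{m+1} = F̄_m + ℓ_m` with
`ℓ_m(x) = ⟪d̄(m), x⟫ + b/2 ‖x‖²`: the `y(m)` are the FTRL leaders for the losses `ℓ_m`. The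
reference point of block `m` is `c(m) = y(m−1)`, with `c(1) = y(1) = x_in`; the delay is present
because the update producing `x_i(m)` uses `F_{m−1,i}`.

* Strong convexity and the Lipschitz property bound the regret in block `m` by
  `3nGK · max_j ‖x_j(m) − c(m)‖ + n (ℓ_m(c(m)) − ℓ_m(x*))` (`block_regret_le`). The bound `‖∇f‖ ≤ G`
  holds even on the boundary of `K̂` because `K̂` contains a ball (`norm_gradient_le`).
* The be-the-leader inequality, together with the stability `‖y(m) − y(m+1)‖ ≤ 2Λ / (mb + 2h)` for
  `Λ = K(G + 2αR)`, bounds the sum of `ℓ_m(c(m)) − ℓ_m(x*)` by `4hR² + ∑ 4Λ² / (mb + 2h)`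
  (`delayed_leader_regret`).
* `x_j(m)` is within `4R/√(L+2)` of the minimizer of `F_{m−1,j}`: conditional gradient closes the gap
  of a `μ`-smooth function to `8μR²/(L+2)` (`conditional_gradient_gap`), and the surrogate has the
  same constant `μ` as its strong convexity modulus. That minimizer is within `‖z_j − z̄‖ / μ` of
  `y(m−1)` (`surrogate_argmin_lipschitz`), and `‖z_j − z̄‖ ≤ K(G + αR)√n / (1 − σ)` because mixing
  contracts deviations from the average by the factor `σ` (`consensus_bound`).
-/

open scoped RealInnerProductSpace

/-! ### Quadratic surrogates and conditional gradient -/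

section
variable {E : Type*} [NormedAddCommGroup E] [InnerProductSpace ℝ E]

/-- The regularized quadratic `⟪z, x⟫ + (a/2) ‖x‖² + h ‖x − p‖²`, of which all surrogate losses are
instances (with `p` the initial point). It is exactly `(a + 2h)`-smooth and `(a + 2h)`-strongly
convex. -/
noncomputable def surrogate (z p : E) (a h : ℝ) (x : E) : ℝ :=
  ⟪z, x⟫ + a / 2 * ‖x‖ ^ 2 + h * ‖x - p‖ ^ 2

/-- Exact second-order expansion; the first-order coefficient is the gradient at `x`. -/
lemma surrogate_add (z p : E) (a h : ℝ) (x v : E) :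
    surrogate z p a h (x + v) = surrogate z p a h x
      + ⟪z + a • x + (2 * h) • (x - p), v⟫ + (a / 2 + h) * ‖v‖ ^ 2 := by
  have h1 : x + v - p = (x - p) + v := by abel
  simp only [surrogate, h1, norm_add_sq_real, inner_add_left, inner_add_right, real_inner_smul_left]
  ring

lemma surrogate_continuous (z p : E) (a h : ℝ) : Continuous (surrogate z p a h) := by
  unfold surrogate
  fun_prop

/-- Quadratic growth of the surrogate away from its constrained minimizer. No sign condition on
`a + 2 * h` is needed, the expansion being an identity. -/
lemma surrogate_growth {z p : E} {a h : ℝ} {S : Set E} (hS : Convex ℝ S) {y : E} (hy : y ∈ S)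
    (hmin : ∀ x ∈ S, surrogate z p a h y ≤ surrogate z p a h x) {x : E} (hx : x ∈ S) :
    surrogate z p a h y + (a + 2 * h) / 2 * ‖x - y‖ ^ 2 ≤ surrogate z p a h x := by
  set g := z + a • y + (2 * h) • (y - p) with hg
  have key : ∀ s ∈ Set.Ioc (0:ℝ) 1, 0 ≤ ⟪g, x - y⟫ + s * ((a / 2 + h) * ‖x - y‖ ^ 2) := by
    intro s hs
    have h1 := hmin _ (hS.add_smul_sub_mem hy hx ⟨hs.1.le, hs.2⟩)
    rw [surrogate_add, inner_smul_right, norm_smul, mul_pow, ← hg, Real.norm_eq_abs, sq_abs] at h1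
    have h2 : 0 ≤ s * (⟪g, x - y⟫ + s * ((a / 2 + h) * ‖x - y‖ ^ 2)) := by nlinarith
    exact nonneg_of_mul_nonneg_right h2 hs.1
  have h0 : 0 ≤ ⟪g, x - y⟫ := by
    have ht : Filter.Tendsto (fun s : ℝ => ⟪g, x - y⟫ + s * ((a / 2 + h) * ‖x - y‖ ^ 2))
        (nhdsWithin 0 (Set.Ioi 0)) (nhds (⟪g, x - y⟫ + 0 * ((a / 2 + h) * ‖x - y‖ ^ 2))) :=
      (Continuous.tendsto (by fun_prop) 0).mono_left nhdsWithin_le_nhds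
    rw [zero_mul, add_zero] at ht
    refine ge_of_tendsto ht ?_
    filter_upwards [Ioc_mem_nhdsGT (zero_lt_one' ℝ)] with s hs using key s hs
  have h3 := surrogate_add z p a h y (x - y)
  rw [add_sub_cancel, ← hg] at h3
  rw [h3]; linarith

/-- The constrained minimizer of the surrogate is `1 / (a + 2h)`-Lipschitz in the linear term. -/
lemma surrogate_argmin_lipschitz {z z' p : E} {a h : ℝ} {S : Set E} (hS : Convex ℝ S)
    (hμ : 0 < a + 2 * h) {y y' : E} (hy : y ∈ S) (hy' : y' ∈ S)
    (hmin : ∀ x ∈ S, surrogate z p a h y ≤ surrogate z p a h x)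
    (hmin' : ∀ x ∈ S, surrogate z' p a h y' ≤ surrogate z' p a h x) :
    ‖y - y'‖ ≤ ‖z - z'‖ / (a + 2 * h) := by
  have h1 := surrogate_growth hS hy hmin hy'
  have h2 := surrogate_growth hS hy' hmin' hy
  have h3 : ⟪z - z', y' - y⟫ ≤ ‖z - z'‖ * ‖y - y'‖ := by
    rw [norm_sub_rev y y']; exact real_inner_le_norm _ _
  rw [norm_sub_rev y' y] at h1
  simp only [inner_sub_left, inner_sub_right] at h3
  simp only [surrogate] at h1 h2
  have h4 : (a + 2 * h) * ‖y - y'‖ ^ 2 ≤ ‖z - z'‖ * ‖y - y'‖ := by linarith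
  rw [le_div_iff₀ hμ]
  rcases (norm_nonneg (y - y')).eq_or_lt with h0 | h0
  · rw [← h0]; simp
  · have : (‖y - y'‖ * (a + 2 * h)) * ‖y - y'‖ ≤ ‖z - z'‖ * ‖y - y'‖ := by nlinarith
    exact le_of_mul_le_mul_right this h0

/-- The classical `O(1/k)` rate of conditional gradient with exact line search. It holds from the
first iteration on, whatever the starting point; comparing the line search with the step
`2 / (τ + 2)` gives the recursion. -/
lemma conditional_gradient_gap {z p : E} {a h D : ℝ} {S : Set E} (hμ : 0 ≤ a + 2 * h)
    (hD : ∀ x ∈ S, ∀ y ∈ S, ‖x - y‖ ≤ D) {y : E} (hy : y ∈ S) {L : ℕ} {c v : ℕ → E} {s : ℕ → ℝ}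
    (hc : ∀ τ ≤ L, c τ ∈ S) (hv : ∀ τ < L, v τ ∈ S)
    (hlin : ∀ τ < L, ∀ u ∈ S, ⟪z + a • c τ + (2 * h) • (c τ - p), v τ⟫ ≤
      ⟪z + a • c τ + (2 * h) • (c τ - p), u⟫)
    (hline : ∀ τ < L, ∀ s' ∈ Set.Icc (0 : ℝ) 1,
      surrogate z p a h (c τ + s τ • (v τ - c τ)) ≤ surrogate z p a h (c τ + s' • (v τ - c τ)))
    (hstep : ∀ τ < L, c (τ + 1) = c τ + s τ • (v τ - c τ)) (k : ℕ) (hk : k + 1 ≤ L) :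
    surrogate z p a h (c (k + 1)) - surrogate z p a h y ≤
      2 * (a + 2 * h) * D ^ 2 / ((k : ℝ) + 1 + 2) := by
  have hprog : ∀ τ < L, ∀ s' ∈ Set.Icc (0 : ℝ) 1,
      surrogate z p a h (c (τ + 1)) - surrogate z p a h y ≤
        (1 - s') * (surrogate z p a h (c τ) - surrogate z p a h y)
          + s' ^ 2 * ((a + 2 * h) * D ^ 2 / 2) := by
    intro τ hτ s' hs'
    have h1 := hline τ hτ s' hs'
    rw [← hstep τ hτ, surrogate_add, inner_smul_right, norm_smul, mul_pow, Real.norm_eq_abs,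
      sq_abs] at h1
    have h2 := hlin τ hτ y hy
    have h3 := surrogate_add z p a h (c τ) (y - c τ)
    rw [add_sub_cancel] at h3
    set g := z + a • c τ + (2 * h) • (c τ - p)
    rw [inner_sub_right] at h1 h3
    have h4 : ‖v τ - c τ‖ ^ 2 ≤ D ^ 2 :=
      pow_le_pow_left₀ (norm_nonneg _) (hD _ (hv τ hτ) _ (hc τ hτ.le)) 2
    have h5 : 0 ≤ (a / 2 + h) * ‖y - c τ‖ ^ 2 := mul_nonneg (by linarith) (sq_nonneg _)
    have h6 : (a / 2 + h) * (s' ^ 2 * ‖v τ - c τ‖ ^ 2) ≤ s' ^ 2 * ((a + 2 * h) * D ^ 2 / 2) := by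
      have : (a / 2 + h) * (s' ^ 2 * ‖v τ - c τ‖ ^ 2) ≤ (a / 2 + h) * (s' ^ 2 * D ^ 2) :=
        mul_le_mul_of_nonneg_left (mul_le_mul_of_nonneg_left h4 (sq_nonneg _)) (by linarith)
      linarith
    have h7 : s' * (⟪g, v τ⟫ - ⟪g, c τ⟫) ≤
        s' * (surrogate z p a h y - surrogate z p a h (c τ)) :=
      mul_le_mul_of_nonneg_left (by linarith) hs'.1
    linarith
  have hM : 0 ≤ (a + 2 * h) * D ^ 2 := mul_nonneg hμ (sq_nonneg _)
  induction k with
  | zero =>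
    -- the full step already forgets the initial gap
    have h1 := hprog 0 (by omega) 1 (by simp)
    have h2 : (a + 2 * h) * D ^ 2 / 2 ≤ 2 * (a + 2 * h) * D ^ 2 / (((0 : ℕ) : ℝ) + 1 + 2) := by
      norm_num; linarith
    linarith
  | succ k ih =>
    have ih := ih (by omega)
    have hk0 : (0 : ℝ) ≤ k := Nat.cast_nonneg k
    have h1 := hprog (k + 1) (by omega) (2 / ((k : ℝ) + 3))
      ⟨by positivity, by rw [div_le_one (by positivity)]; linarith⟩
    have h2 : (1 - 2 / ((k : ℝ) + 3)) * (surrogate z p a h (c (k + 1)) - surrogate z p a h y)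
        ≤ (1 - 2 / ((k : ℝ) + 3)) * (2 * (a + 2 * h) * D ^ 2 / ((k : ℝ) + 1 + 2)) :=
      mul_le_mul_of_nonneg_left ih
        (by rw [sub_nonneg, div_le_one (by positivity)]; linarith)
    have h3 : (1 - 2 / ((k : ℝ) + 3)) * (2 * (a + 2 * h) * D ^ 2 / ((k : ℝ) + 1 + 2))
        + (2 / ((k : ℝ) + 3)) ^ 2 * ((a + 2 * h) * D ^ 2 / 2)
        = ((a + 2 * h) * D ^ 2) * (2 * (k + 2) / ((k : ℝ) + 3) ^ 2) := by
      have : (k : ℝ) + 1 + 2 = k + 3 := by ring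
      rw [this]
      field_simp
      ring
    have h4 : (2 * (k + 2) / ((k : ℝ) + 3) ^ 2) ≤ 2 / ((k : ℝ) + 4) := by
      rw [div_le_div_iff₀ (by positivity) (by positivity)]
      nlinarith
    have h5 := mul_le_mul_of_nonneg_left h4 hM
    have h6 : 2 * (a + 2 * h) * D ^ 2 / (((k + 1 : ℕ) : ℝ) + 1 + 2)
        = ((a + 2 * h) * D ^ 2) * (2 / ((k : ℝ) + 4)) := by
      push_cast
      rw [show (k : ℝ) + 1 + 1 + 2 = k + 4 by ring]; ring
    rw [h6]; linarith

/-- Distance from the output of conditional gradient on the surrogate with linear term `z` to the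
minimizer `y'` of the surrogate with linear term `z'`. -/
lemma cg_iterate_dist_le {E : Type*} [NormedAddCommGroup E] [InnerProductSpace ℝ E]
    {S : Set E} (hS : Convex ℝ S) {z z' p : E} {a h R : ℝ} (hμ : 0 < a + 2 * h)
    (hR0 : 0 ≤ R) (hR : ∀ x ∈ S, ‖x‖ ≤ R) {L : ℕ} (hL : 1 ≤ L) {c v : ℕ → E} {s : ℕ → ℝ}
    (hc : ∀ τ ≤ L, c τ ∈ S) (hv : ∀ τ < L, v τ ∈ S)
    (hlin : ∀ τ < L, ∀ u ∈ S, ⟪z + a • c τ + (2 * h) • (c τ - p), v τ⟫ ≤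
      ⟪z + a • c τ + (2 * h) • (c τ - p), u⟫)
    (hline : ∀ τ < L, ∀ s' ∈ Set.Icc (0 : ℝ) 1,
      surrogate z p a h (c τ + s τ • (v τ - c τ)) ≤ surrogate z p a h (c τ + s' • (v τ - c τ)))
    (hstep : ∀ τ < L, c (τ + 1) = c τ + s τ • (v τ - c τ)) {y y' : E} (hy : y ∈ S)
    (hmin : ∀ x ∈ S, surrogate z p a h y ≤ surrogate z p a h x) (hy' : y' ∈ S)
    (hmin' : ∀ x ∈ S, surrogate z' p a h y' ≤ surrogate z' p a h x) :
    ‖c L - y'‖ ≤ 4 * R / √(L + 2) + ‖z - z'‖ / (a + 2 * h) := by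
  have hD : ∀ x ∈ S, ∀ y ∈ S, ‖x - y‖ ≤ 2 * R := fun x hx y hy =>
    (norm_sub_le x y).trans (by linarith [hR x hx, hR y hy])
  obtain ⟨k, rfl⟩ : ∃ k, L = k + 1 := ⟨L - 1, by omega⟩
  have h1 := conditional_gradient_gap hμ.le hD hy hc hv hlin hline hstep k le_rfl
  have h2 := surrogate_growth hS hy hmin (hc (k + 1) le_rfl)
  have hk : (0 : ℝ) < ((k + 1 : ℕ) : ℝ) + 2 := by positivity
  have h3 : ‖c (k + 1) - y‖ ≤ 4 * R / √(((k + 1 : ℕ) : ℝ) + 2) := by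
    refine (sq_le_sq₀ (by positivity) (by positivity)).1 ?_
    rw [div_pow, Real.sq_sqrt hk.le]
    have h4 : (a + 2 * h) * ‖c (k + 1) - y‖ ^ 2 ≤
        (a + 2 * h) * ((4 * R) ^ 2 / (((k + 1 : ℕ) : ℝ) + 2)) := by
      have : 2 * (a + 2 * h) * (2 * R) ^ 2 / ((k : ℝ) + 1 + 2)
          = (a + 2 * h) * ((4 * R) ^ 2 / (((k + 1 : ℕ) : ℝ) + 2)) / 2 := by
        push_cast; ring
      linarith
    exact le_of_mul_le_mul_left h4 hμ
  have h5 := surrogate_argmin_lipschitz hS hμ hy hy' hmin hmin'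
  exact (norm_sub_le_norm_sub_add_norm_sub _ y _).trans (add_le_add h3 h5)

/-- On a convex set containing a ball around the origin, a Lipschitz bound on the set alone controls
the gradient at every point of the set, boundary points included: for `‖u‖ ≤ r`, both
`x + s (u − x)` and `x + s (0 − x)` stay in the set, and their difference is `s u`. -/
lemma norm_gradient_le [CompleteSpace E] {S : Set E} (hS : Convex ℝ S) {r G : ℝ} (hr : 0 < r)
    (hball : Metric.closedBall 0 r ⊆ S) {f : E → ℝ} {g x : E} (hx : x ∈ S)
    (hf : HasGradientAt f g x) (hG : 0 ≤ G)
    (hlip : ∀ x ∈ S, ∀ y ∈ S, |f x - f y| ≤ G * ‖x - y‖) : ‖g‖ ≤ G := by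
  rcases eq_or_ne g 0 with rfl | hg
  · simpa using hG
  have hgn : 0 < ‖g‖ := norm_pos_iff.2 hg
  set u : E := (r / ‖g‖) • g with hu
  have hun : ‖u‖ = r := by
    rw [hu, norm_smul, Real.norm_eq_abs, abs_of_pos (by positivity)]; field_simp
  have hline : ∀ w : E, HasDerivAt (fun s : ℝ => f (x + s • w)) ⟪g, w⟫ 0 := by
    intro w
    have h1 : HasDerivAt (fun s : ℝ => x + s • w) w 0 := by
      simpa using ((hasDerivAt_id (0:ℝ)).smul_const w).const_add x
    have h2 : HasFDerivAt f (InnerProductSpace.toDual ℝ E g) (x + (0:ℝ) • w) := by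
      simpa using hf.hasFDerivAt
    exact h2.comp_hasDerivAt (0:ℝ) h1
  have hd := (hline (u - x)).sub (hline (0 - x))
  have hval : ⟪g, u - x⟫ - ⟪g, 0 - x⟫ = r * ‖g‖ := by
    rw [← inner_sub_right, sub_sub_sub_cancel_right, sub_zero, hu, inner_smul_right,
      real_inner_self_eq_norm_sq]
    field_simp
  rw [hval] at hd
  have hslope := hd.tendsto_slope_zero_right
  have hle : r * ‖g‖ ≤ G * r := by
    refine le_of_tendsto hslope ?_
    filter_upwards [Ioc_mem_nhdsGT (zero_lt_one' ℝ)] with s hs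
    have hs' : s ∈ Set.Icc (0:ℝ) 1 := ⟨hs.1.le, hs.2⟩
    have m1 := hS.add_smul_sub_mem hx (hball (show u ∈ Metric.closedBall 0 r by simp [hun])) hs'
    have m2 := hS.add_smul_sub_mem hx
      (hball (show (0:E) ∈ Metric.closedBall 0 r by simp [hr.le])) hs'
    have h1 := (abs_le.1 (hlip _ m1 _ m2)).2
    have h2 : x + s • (u - x) - (x + s • (0 - x)) = s • u := by
      rw [add_sub_add_left_eq_sub, ← smul_sub]; congr 1; abel
    rw [h2, norm_smul, hun, Real.norm_eq_abs, abs_of_pos hs.1] at h1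
    simp only [Pi.sub_apply, zero_add, zero_smul, add_zero, sub_self, sub_zero, smul_eq_mul]
    rw [inv_mul_le_iff₀ hs.1]
    linarith
  nlinarith

end

/-! ### Consensus of the dual variables -/

/-- A matrix acting on families of vectors scales the Frobenius norm by at most its `ℓ²` operator norm;
the inequality is applied coordinate by coordinate. -/
lemma sum_norm_sq_mix_le {n d : ℕ} (A : Matrix (Fin n) (Fin n) ℝ)
    (w : Fin n → EuclideanSpace ℝ (Fin d)) :
    ∑ i, ‖∑ j, A i j • w j‖ ^ 2 ≤
      ‖Matrix.toEuclideanCLM (𝕜 := ℝ) (n := Fin n) A‖ ^ 2 * ∑ j, ‖w j‖ ^ 2 := by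
  simp only [EuclideanSpace.real_norm_sq_eq]
  rw [Finset.sum_comm, Finset.sum_comm (s := Finset.univ) (t := Finset.univ)
    (f := fun j k => (w j).ofLp k ^ 2), Finset.mul_sum]
  refine Finset.sum_le_sum fun k _ => ?_
  have h1 := (Matrix.toEuclideanCLM (𝕜 := ℝ) (n := Fin n) A).le_opNorm
    (WithLp.toLp 2 fun j => (w j).ofLp k)
  have h2 := pow_le_pow_left₀ (norm_nonneg _) h1 2
  rw [mul_pow, EuclideanSpace.real_norm_sq_eq, EuclideanSpace.real_norm_sq_eq] at h2
  simpa [Matrix.mulVec, dotProduct] using h2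

lemma sum_norm_sq_sub_mean_le {n : ℕ} {E : Type*} [NormedAddCommGroup E] [InnerProductSpace ℝ E]
    (w : Fin n → E) : ∑ i, ‖w i - (n : ℝ)⁻¹ • ∑ j, w j‖ ^ 2 ≤ ∑ i, ‖w i‖ ^ 2 := by
  rcases Nat.eq_zero_or_pos n with rfl | hn
  · simp
  have hn' : (0 : ℝ) < n := by exact_mod_cast hn
  set b := (n : ℝ)⁻¹ • ∑ j, w j with hb
  have h0 : ∑ j, w j = (n : ℝ) • b := by rw [hb, smul_inv_smul₀ hn'.ne']
  simp only [norm_sub_sq_real, Finset.sum_add_distrib, Finset.sum_sub_distrib, ← Finset.mul_sum,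
    ← sum_inner, h0, inner_smul_left, real_inner_self_eq_norm_sq]
  simp
  nlinarith [mul_nonneg hn'.le (sq_nonneg ‖b‖)]

/-- The deviation of each dual variable from the network average stays below `C √n / (1 − σ)`. The
deviations, collected in one vector of `(ℝ^d)^n`, satisfy `W(m+1) = A W(m) + V(m)` with `A = P − J`,
where `J` is the averaging matrix, `‖A‖ = σ` and `‖V(m)‖ ≤ C √n`. -/
lemma consensus_bound {n d B : ℕ} {P : Matrix (Fin n) (Fin n) ℝ}
    (hrow : ∀ i, ∑ j, P i j = 1) (hcol : ∀ j, ∑ i, P i j = 1) {σ C : ℝ}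
    (hσ : σ = ‖Matrix.toEuclideanCLM (𝕜 := ℝ) (n := Fin n)
      (P - Matrix.of fun _ _ => (n : ℝ)⁻¹)‖) (hσlt : σ < 1)
    {z D : Fin n → ℕ → EuclideanSpace ℝ (Fin d)} (hz1 : ∀ i, z i 1 = 0)
    (hz : ∀ i, ∀ m ∈ Finset.Icc 1 B, z i (m + 1) = (∑ j, P i j • z j m) + D i m)
    (hC : 0 ≤ C) (hD : ∀ i, ∀ m ∈ Finset.Icc 1 B, ‖D i m‖ ≤ C)
    (i : Fin n) (m : ℕ) (hm : m ∈ Finset.Icc 1 B) :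
    ‖z i m - (n : ℝ)⁻¹ • ∑ j, z j m‖ ≤ C * √n / (1 - σ) := by
  set A : Matrix (Fin n) (Fin n) ℝ := P - Matrix.of fun _ _ => (n : ℝ)⁻¹ with hA
  have hn : 0 < n := i.pos
  have hn' : (0 : ℝ) < n := by exact_mod_cast hn
  have hσ0 : 0 ≤ σ := hσ ▸ norm_nonneg _
  have hC0 : 0 ≤ C * √n / (1 - σ) := div_nonneg (by positivity) (by linarith)
  set w : ℕ → Fin n → EuclideanSpace ℝ (Fin d) := fun m i => z i m - (n : ℝ)⁻¹ • ∑ j, z j m with hw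
  let W : ℕ → PiLp 2 (fun _ : Fin n => EuclideanSpace ℝ (Fin d)) := fun m => WithLp.toLp 2 (w m)
  have hWn : ∀ m, ‖W m‖ ^ 2 = ∑ i, ‖w m i‖ ^ 2 := fun m => PiLp.norm_sq_eq_of_L2 _ _
  have hrec : ∀ m ∈ Finset.Icc 1 B, ∀ i, w (m + 1) i =
      (∑ j, A i j • w m j)
        + (D i m - (n : ℝ)⁻¹ • ∑ j, D j m) := by
    intro m hm i
    have hsumz : ∑ j, z j (m + 1) = ∑ j, z j m + ∑ j, D j m := by
      rw [Finset.sum_congr rfl fun j _ => hz j m hm, Finset.sum_add_distrib, Finset.sum_comm]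
      simp only [← Finset.sum_smul, hcol, one_smul]
    have hsumw : ∑ j, w m j = 0 := by
      simp only [hw, Finset.sum_sub_distrib, Finset.sum_const, Finset.card_univ, Fintype.card_fin]
      rw [← Nat.cast_smul_eq_nsmul ℝ, smul_inv_smul₀ hn'.ne', sub_self]
    -- the averaging matrix annihilates the deviations, so it can be inserted for free
    have h1 : ∑ j, A i j • w m j = ∑ j, P i j • w m j := by
      simp only [hA, Matrix.sub_apply, Matrix.of_apply, sub_smul, Finset.sum_sub_distrib,
        ← Finset.smul_sum, hsumw, smul_zero, sub_zero]
    rw [h1]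
    simp only [hw, hsumz, hz i m hm, smul_sub, Finset.sum_sub_distrib, ← Finset.sum_smul, hrow,
      one_smul, smul_add]
    abel
  have hstep : ∀ m ∈ Finset.Icc 1 B, ‖W (m + 1)‖ ≤ σ * ‖W m‖ + C * √n := by
    intro m hm
    let U : PiLp 2 (fun _ : Fin n => EuclideanSpace ℝ (Fin d)) :=
      WithLp.toLp 2 fun i => ∑ j, A i j • w m j
    let V : PiLp 2 (fun _ : Fin n => EuclideanSpace ℝ (Fin d)) :=
      WithLp.toLp 2 fun i => D i m - (n : ℝ)⁻¹ • ∑ j, D j m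
    have hUV : W (m + 1) = U + V := by
      ext1 i
      exact hrec m hm i
    have hU : ‖U‖ ≤ σ * ‖W m‖ := by
      refine (sq_le_sq₀ (by positivity) (by positivity)).1 ?_
      rw [mul_pow, hWn, PiLp.norm_sq_eq_of_L2, hσ]
      exact sum_norm_sq_mix_le _ _
    have hV : ‖V‖ ≤ C * √n := by
      refine (sq_le_sq₀ (by positivity) (by positivity)).1 ?_
      rw [mul_pow, Real.sq_sqrt hn'.le, PiLp.norm_sq_eq_of_L2]
      refine (sum_norm_sq_sub_mean_le fun i => D i m).trans ?_
      refine (Finset.sum_le_sum fun i _ =>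
        pow_le_pow_left₀ (norm_nonneg _) (hD i m hm) 2).trans ?_
      simp [mul_comm]
    rw [hUV]
    exact (norm_add_le _ _).trans (add_le_add hU hV)
  have hall : ∀ k, k + 1 ≤ B → ‖W (k + 1)‖ ≤ C * √n / (1 - σ) := by
    intro k
    induction k with
    | zero =>
      intro _
      have : W (0 + 1) = 0 := by
        ext1 i
        simp [W, hw, hz1]
      rw [this, norm_zero]; exact hC0
    | succ k ih =>
      intro hk
      have h1 := hstep (k + 1) (Finset.mem_Icc.2 ⟨by omega, by omega⟩)
      have h2 := mul_le_mul_of_nonneg_left (ih (by omega)) hσ0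
      have h3 : σ * (C * √n / (1 - σ)) + C * √n = C * √n / (1 - σ) := by
        have : (1 - σ) ≠ 0 := by linarith
        field_simp
        ring
      linarith
  obtain ⟨hm1, hm2⟩ := Finset.mem_Icc.1 hm
  obtain ⟨k, rfl⟩ : ∃ k, m = k + 1 := ⟨m - 1, by omega⟩
  exact (PiLp.norm_apply_le (W (k + 1)) i).trans (hall k hm2)


/-! ### Follow the regularized leader with delay -/

/-- The be-the-leader inequality: playing the minimizer `y (m + 1)` of the cumulative loss that
already includes `l m` has regret at most the range of the initial regularizer `Q 1`. -/
lemma be_the_leader {E : Type*} {S : Set E} {Q l : ℕ → E → ℝ} {y : ℕ → E} {N : ℕ}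
    (hy : ∀ m, y m ∈ S) (hmin : ∀ m, ∀ x ∈ S, Q m (y m) ≤ Q m x)
    (hQ : ∀ m ∈ Finset.Icc 1 N, ∀ x, Q (m + 1) x = Q m x + l m x) {x : E} (hx : x ∈ S) :
    ∑ m ∈ Finset.Icc 1 N, (l m (y (m + 1)) - l m x) ≤ Q 1 x - Q 1 (y 1) := by
  have h1 : ∀ k ≤ N, Q 1 (y 1) + ∑ m ∈ Finset.Icc 1 k, l m (y (m + 1)) ≤ Q (k + 1) (y (k + 1)) := by
    intro k
    induction k with
    | zero => simp
    | succ k ih =>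
      intro hk
      have := ih (by omega)
      rw [Finset.sum_Icc_succ_top (by omega),
        hQ (k + 1) (Finset.mem_Icc.2 ⟨by omega, hk⟩)]
      have := hmin (k + 1) _ (hy (k + 1 + 1))
      linarith
  have h2 : ∀ k ≤ N, Q (k + 1) x = Q 1 x + ∑ m ∈ Finset.Icc 1 k, l m x := by
    intro k
    induction k with
    | zero => simp
    | succ k ih =>
      intro hk
      rw [Finset.sum_Icc_succ_top (by omega),
        hQ (k + 1) (Finset.mem_Icc.2 ⟨by omega, hk⟩), ih (by omega)]
      ring
  have h3 := h1 N le_rfl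
  have h4 := h2 N le_rfl
  have h5 := hmin (N + 1) x hx
  rw [Finset.sum_sub_distrib]
  linarith

/-- Stability of leaders: adding a `Λ`-Lipschitz loss that turns `Q` into an `(a + 2h)`-strongly
convex surrogate moves the minimizer by at most `2Λ / (a + 2h)`. -/
lemma leader_step {E : Type*} [NormedAddCommGroup E] [InnerProductSpace ℝ E]
    {S : Set E} (hS : Convex ℝ S) {z p : E} {a h Λ : ℝ} (hμ : 0 < a + 2 * h) {Q l : E → ℝ}
    (hQ : ∀ x, surrogate z p a h x = Q x + l x) {y y' : E} (hy : y ∈ S) (hy' : y' ∈ S)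
    (hmin : ∀ x ∈ S, Q y ≤ Q x)
    (hmin' : ∀ x ∈ S, surrogate z p a h y' ≤ surrogate z p a h x)
    (hΛ : 0 ≤ Λ) (hl : l y - l y' ≤ Λ * ‖y - y'‖) : ‖y - y'‖ ≤ 2 * Λ / (a + 2 * h) := by
  have h1 := surrogate_growth hS hy' hmin' hy
  have h2 := hmin y' hy'
  rw [hQ, hQ] at h1
  rw [le_div_iff₀ hμ]
  rcases (norm_nonneg (y - y')).eq_or_lt with h0 | h0
  · rw [← h0]; linarith
  · have : (‖y - y'‖ * (a + 2 * h)) * ‖y - y'‖ ≤ 2 * Λ * ‖y - y'‖ := by nlinarith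
    exact le_of_mul_le_mul_right this h0

/-- Regret of FTRL with one block of delay on the losses `⟪D m, ·⟫ + (b/2) ‖·‖²`. The point used for
the `m`-th loss is `y (m - 1)`, and `y 1` for `m = 1`. -/
lemma delayed_leader_regret {E : Type*} [NormedAddCommGroup E] [InnerProductSpace ℝ E]
    {S : Set E} (hS : Convex ℝ S) {R : ℝ} (hR : ∀ x ∈ S, ‖x‖ ≤ R) {b h C : ℝ} (hb : 0 ≤ b)
    (hh : 0 < h) {N : ℕ} (hC0 : 0 ≤ C) {D z : ℕ → E} {p : E} (hp : p ∈ S) (hz1 : z 1 = 0)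
    (hz : ∀ m ∈ Finset.Icc 1 N, z (m + 1) = z m + D m)
    (hD : ∀ m ∈ Finset.Icc 1 N, ‖D m‖ ≤ C) {y : ℕ → E} (hy : ∀ m, y m ∈ S)
    (hmin : ∀ m : ℕ, ∀ x ∈ S, surrogate (z m) p (((m : ℝ) - 1) * b) h (y m) ≤
      surrogate (z m) p (((m : ℝ) - 1) * b) h x) {x : E} (hx : x ∈ S) :
    ∑ m ∈ Finset.Icc 1 N, ((⟪D m, y (max 1 (m - 1))⟫ + b / 2 * ‖y (max 1 (m - 1))‖ ^ 2)
        - (⟪D m, x⟫ + b / 2 * ‖x‖ ^ 2)) ≤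
      h * ‖x - p‖ ^ 2 + ∑ m ∈ Finset.Icc 1 N, 4 * (C + b * R) ^ 2 / ((m : ℝ) * b + 2 * h) := by
  set l : ℕ → E → ℝ := fun m x => ⟪D m, x⟫ + b / 2 * ‖x‖ ^ 2 with hl
  have hR0 : 0 ≤ R := (norm_nonneg p).trans (hR p hp)
  set Λ := C + b * R with hΛ
  have hΛ0 : 0 ≤ Λ := by positivity
  have hQ : ∀ m ∈ Finset.Icc 1 N, ∀ x,
      surrogate (z (m + 1)) p ((((m + 1 : ℕ) : ℝ) - 1) * b) h x
        = surrogate (z m) p (((m : ℝ) - 1) * b) h x + l m x := by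
    intro m hm x
    rw [hz m hm]
    simp only [surrogate, hl, inner_add_left]
    push_cast
    ring
  have hLip : ∀ m ∈ Finset.Icc 1 N, ∀ u ∈ S, ∀ v ∈ S, l m u - l m v ≤ Λ * ‖u - v‖ := by
    intro m hm u hu v hv
    have h1 : ⟪D m, u - v⟫ ≤ C * ‖u - v‖ :=
      (real_inner_le_norm _ _).trans (mul_le_mul_of_nonneg_right (hD m hm) (norm_nonneg _))
    have h2 : ‖u‖ ^ 2 - ‖v‖ ^ 2 ≤ 2 * R * ‖u - v‖ := by
      have h3 := norm_sub_norm_le u v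
      have h4 := hR u hu
      have h5 := hR v hv
      have h6 := norm_nonneg u
      have h7 := norm_nonneg v
      calc ‖u‖ ^ 2 - ‖v‖ ^ 2 = (‖u‖ + ‖v‖) * (‖u‖ - ‖v‖) := by ring
        _ ≤ (‖u‖ + ‖v‖) * ‖u - v‖ := mul_le_mul_of_nonneg_left h3 (by positivity)
        _ ≤ 2 * R * ‖u - v‖ := mul_le_mul_of_nonneg_right (by linarith) (norm_nonneg _)
    rw [inner_sub_right] at h1
    have h8 := mul_le_mul_of_nonneg_left h2 hb
    simp only [hl, hΛ]
    linarith
  have hmb : ∀ m : ℕ, 0 < (m : ℝ) * b + 2 * h := fun m => by positivity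
  have hstep : ∀ m ∈ Finset.Icc 1 N, ‖y m - y (m + 1)‖ ≤ 2 * Λ / ((m : ℝ) * b + 2 * h) := by
    intro m hm
    have hc : (((m + 1 : ℕ) : ℝ) - 1) * b + 2 * h = (m : ℝ) * b + 2 * h := by push_cast; ring
    rw [← hc]
    exact leader_step hS (hc ▸ hmb m) (hQ m hm) (hy m) (hy (m + 1)) (hmin m) (hmin (m + 1))
      hΛ0 (hLip m hm _ (hy m) _ (hy (m + 1)))
  -- one step of delay makes each stability term count at most twice
  have hdrift : ∀ k, k + 1 ≤ N →
      ∑ m ∈ Finset.Icc 1 (k + 1), ‖y (max 1 (m - 1)) - y (m + 1)‖ ≤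
        2 * ∑ m ∈ Finset.Icc 1 k, 2 * Λ / ((m : ℝ) * b + 2 * h)
          + 2 * Λ / (((k + 1 : ℕ) : ℝ) * b + 2 * h) := by
    intro k
    induction k with
    | zero =>
      intro hk
      simpa using hstep 1 (Finset.mem_Icc.2 ⟨le_rfl, hk⟩)
    | succ k ih =>
      intro hk
      have h0 := ih (by omega)
      have h1 := hstep (k + 1) (Finset.mem_Icc.2 ⟨by omega, by omega⟩)
      have h2 := hstep (k + 1 + 1) (Finset.mem_Icc.2 ⟨by omega, hk⟩)
      have h3 := norm_sub_le_norm_sub_add_norm_sub (y (k + 1)) (y (k + 1 + 1)) (y (k + 1 + 1 + 1))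
      rw [Finset.sum_Icc_succ_top (by omega), Finset.sum_Icc_succ_top (b := k)
        (f := fun m : ℕ => 2 * Λ / ((m : ℝ) * b + 2 * h)) (by omega)]
      have h4 : max 1 (k + 1 + 1 - 1) = k + 1 := by omega
      rw [h4]
      linarith
  have hdrift' : ∑ m ∈ Finset.Icc 1 N, ‖y (max 1 (m - 1)) - y (m + 1)‖ ≤
      2 * ∑ m ∈ Finset.Icc 1 N, 2 * Λ / ((m : ℝ) * b + 2 * h) := by
    rcases N with _ | k
    · simp
    · have h1 := hdrift k le_rfl
      have h2 : 0 ≤ 2 * Λ / (((k + 1 : ℕ) : ℝ) * b + 2 * h) := div_nonneg (by positivity) (hmb _).le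
      rw [Finset.sum_Icc_succ_top (b := k) (f := fun m : ℕ => 2 * Λ / ((m : ℝ) * b + 2 * h))
        (by omega)]
      linarith
  have hbtl := be_the_leader (Q := fun m => surrogate (z m) p (((m : ℝ) - 1) * b) h)
    (l := l) hy hmin hQ hx
  have hQ1 : surrogate (z 1) p ((((1 : ℕ) : ℝ) - 1) * b) h x
      - surrogate (z 1) p ((((1 : ℕ) : ℝ) - 1) * b) h (y 1) ≤ h * ‖x - p‖ ^ 2 := by
    simp only [surrogate, hz1]
    have : 0 ≤ h * ‖y 1 - p‖ ^ 2 := by positivity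
    simp only [inner_zero_left, Nat.cast_one, sub_self, zero_mul, zero_div]
    linarith
  have h5 : ∑ m ∈ Finset.Icc 1 N, (l m (y (max 1 (m - 1))) - l m (y (m + 1))) ≤
      Λ * ∑ m ∈ Finset.Icc 1 N, ‖y (max 1 (m - 1)) - y (m + 1)‖ := by
    rw [Finset.mul_sum]
    exact Finset.sum_le_sum fun m hm => hLip m hm _ (hy _) _ (hy _)
  have h6 := mul_le_mul_of_nonneg_left hdrift' hΛ0
  have h7 : Λ * (2 * ∑ m ∈ Finset.Icc 1 N, 2 * Λ / ((m : ℝ) * b + 2 * h)) =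
      ∑ m ∈ Finset.Icc 1 N, 4 * Λ ^ 2 / ((m : ℝ) * b + 2 * h) := by
    rw [Finset.mul_sum, Finset.mul_sum]
    exact Finset.sum_congr rfl fun m _ => by ring
  simp only [Finset.sum_sub_distrib] at *
  linarith

/-! ### Decomposition of the regret -/

lemma sum_blocks (B K : ℕ) (g : ℕ → ℝ) :
    ∑ m ∈ Finset.Icc 1 B, ∑ t ∈ Finset.Icc ((m - 1) * K + 1) (m * K), g t
      = ∑ t ∈ Finset.Icc 1 (B * K), g t := by
  induction B with
  | zero => simp
  | succ B ih =>
    rw [Finset.sum_Icc_succ_top (by omega), ih]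
    have hc : ∀ N, Finset.Icc 1 N = Finset.Ioc 0 N := fun N => rfl
    have hc' : Finset.Icc ((B + 1 - 1) * K + 1) ((B + 1) * K) = Finset.Ioc (B * K) ((B + 1) * K) := by
      ext t; simp only [Nat.add_sub_cancel, Finset.mem_Icc, Finset.mem_Ioc]; omega
    rw [hc, hc, hc']
    exact Finset.sum_Ioc_consecutive g (Nat.zero_le _) (Nat.mul_le_mul_right _ (Nat.le_succ _))

/-- The loss difference of a learner playing `u`, for a loss whose gradient `g` was taken at `w`, is
bounded through an arbitrary reference point `c` by a linear-quadratic loss difference between `c`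
and `x`. Discarded in the process is `−(α/2) ‖w − c‖²`. -/
lemma linearized_loss_le {E : Type*} [NormedAddCommGroup E] [InnerProductSpace ℝ E]
    {S : Set E} {f : E → ℝ} {g : E} {G α : ℝ} (hα : 0 ≤ α) (hg : ‖g‖ ≤ G)
    (hlip : ∀ x ∈ S, ∀ y ∈ S, |f x - f y| ≤ G * ‖x - y‖) {u w c x : E} (hu : u ∈ S)
    (hw : w ∈ S) (hsc : f w + ⟪g, x - w⟫ + α / 2 * ‖x - w‖ ^ 2 ≤ f x) :
    f u - f x ≤ G * (‖u - c‖ + 2 * ‖w - c‖) + ⟪g - α • w, c - x⟫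
      + α / 2 * (‖c‖ ^ 2 - ‖x‖ ^ 2) := by
  have hG : 0 ≤ G := (norm_nonneg g).trans hg
  have h1 := (abs_le.1 (hlip u hu w hw)).2
  have h2 : G * ‖u - w‖ ≤ G * (‖u - c‖ + ‖w - c‖) := by
    refine mul_le_mul_of_nonneg_left ?_ hG
    rw [norm_sub_rev w c]
    exact norm_sub_le_norm_sub_add_norm_sub _ _ _
  have h3 : ⟪g, w - c⟫ ≤ G * ‖w - c‖ :=
    (real_inner_le_norm _ _).trans (mul_le_mul_of_nonneg_right hg (norm_nonneg _))
  have h4 : 0 ≤ α / 2 * ‖w - c‖ ^ 2 := by positivity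
  rw [norm_sub_sq_real] at hsc h4
  simp only [inner_sub_left, inner_sub_right, real_inner_smul_left] at *
  rw [real_inner_comm w x] at hsc
  linarith

/-- Regret in one block `J`: a consensus error plus `n` times the regret of the reference point `c`
for the averaged linear-quadratic loss. -/
lemma block_regret_le {n d K : ℕ} {S : Set (EuclideanSpace ℝ (Fin d))} {G α : ℝ} (hα : 0 ≤ α)
    {J : Finset ℕ} (hJ : J.card = K)
    {f : ℕ → Fin n → EuclideanSpace ℝ (Fin d) → ℝ}
    {g : ℕ → Fin n → EuclideanSpace ℝ (Fin d)} (hg : ∀ t ∈ J, ∀ j, ‖g t j‖ ≤ G)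
    (hlip : ∀ t ∈ J, ∀ j, ∀ x ∈ S, ∀ y ∈ S, |f t j x - f t j y| ≤ G * ‖x - y‖)
    {w : Fin n → EuclideanSpace ℝ (Fin d)} (hw : ∀ j, w j ∈ S)
    {x : EuclideanSpace ℝ (Fin d)}
    (hsc : ∀ t ∈ J, ∀ j, f t j (w j) + ⟪g t j, x - w j⟫ + α / 2 * ‖x - w j‖ ^ 2 ≤ f t j x)
    (i : Fin n) {c : EuclideanSpace ℝ (Fin d)} {ε : ℝ} (hG : 0 ≤ G)
    (hε : ∀ j, ‖w j - c‖ ≤ ε) :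
    ∑ t ∈ J, ∑ j, (f t j (w i) - f t j x) ≤ 3 * n * G * K * ε +
      n * ((⟪(n : ℝ)⁻¹ • ∑ j, (∑ t ∈ J, g t j - (α * K) • w j), c⟫ + α * K / 2 * ‖c‖ ^ 2)
        - (⟪(n : ℝ)⁻¹ • ∑ j, (∑ t ∈ J, g t j - (α * K) • w j), x⟫ + α * K / 2 * ‖x‖ ^ 2)) := by
  have hn' : (n : ℝ) ≠ 0 := by exact_mod_cast i.pos.ne'
  have hpt : ∀ t ∈ J, ∀ j, f t j (w i) - f t j x ≤
      G * (3 * ε) + ⟪g t j - α • w j, c - x⟫ + α / 2 * (‖c‖ ^ 2 - ‖x‖ ^ 2) := by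
    intro t ht j
    have h1 := linearized_loss_le (c := c) hα (hg t ht j) (hlip t ht j) (hw i) (hw j) (hsc t ht j)
    have h2 : G * (‖w i - c‖ + 2 * ‖w j - c‖) ≤ G * (3 * ε) :=
      mul_le_mul_of_nonneg_left (by linarith [hε i, hε j]) hG
    linarith
  refine (Finset.sum_le_sum fun t ht => Finset.sum_le_sum fun j _ => hpt t ht j).trans ?_
  have hsum : ∑ t ∈ J, ∑ j, ⟪g t j - α • w j, c - x⟫ =
      ⟪∑ j, (∑ t ∈ J, g t j - (α * K) • w j), c - x⟫ := by
    rw [Finset.sum_comm, sum_inner]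
    refine Finset.sum_congr rfl fun j _ => ?_
    rw [← sum_inner, Finset.sum_sub_distrib, Finset.sum_const, hJ, ← Nat.cast_smul_eq_nsmul ℝ,
      smul_smul, mul_comm (K : ℝ)]
  simp only [Finset.sum_add_distrib]
  rw [hsum]
  simp only [Finset.sum_const, Finset.card_univ, Fintype.card_fin, hJ,
    nsmul_eq_mul, real_inner_smul_left, inner_sub_right]
  refine le_of_eq ?_
  field_simp
  ring

/-- Regret bound for D-BOCG (Theorem 2): in the distributed block online conditional
gradient setup with `α`-strongly convex `G`-Lipschitz losses, where each block update is
performed by `L ≥ 1` conditional gradient iterations with exact line search on the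
surrogate loss, the regret of every local learner satisfies the stated bound. -/
theorem dbocg_regret_bound_with_cg_updates
    (d n B K : ℕ) (hd : 1 ≤ d) (hn : 1 ≤ n) (hB : 1 ≤ B) (hK : 1 ≤ K)
    (T : ℕ) (hT : T = B * K)
    (Khat : Set (EuclideanSpace ℝ (Fin d)))
    (hKconv : Convex ℝ Khat) (hKcomp : IsCompact Khat)
    (r R : ℝ) (hr : 0 < r) (hrR : r ≤ R)
    (hballin : Metric.closedBall 0 r ⊆ Khat)
    (hballout : Khat ⊆ Metric.closedBall 0 R)
    (G α : ℝ) (hα : 0 ≤ α)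
    (f : ℕ → Fin n → EuclideanSpace ℝ (Fin d) → ℝ)
    (f' : ℕ → Fin n → EuclideanSpace ℝ (Fin d) → EuclideanSpace ℝ (Fin d))
    (hdiff : ∀ t i x, HasGradientAt (f t i) (f' t i x) x)
    (hlip : ∀ t ∈ Finset.Icc 1 T, ∀ (i : Fin n), ∀ x ∈ Khat, ∀ y ∈ Khat,
      |f t i x - f t i y| ≤ G * ‖x - y‖)
    (hsc : ∀ t ∈ Finset.Icc 1 T, ∀ (i : Fin n), ∀ x ∈ Khat, ∀ y ∈ Khat,
      f t i x + ⟪f' t i x, y - x⟫ + α / 2 * ‖y - x‖ ^ 2 ≤ f t i y)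
    (P : Matrix (Fin n) (Fin n) ℝ)
    (hpos : ∀ i j, 0 ≤ P i j) (hsymm : P.IsSymm)
    (hrow : ∀ i, ∑ j, P i j = 1) (hcol : ∀ j, ∑ i, P i j = 1)
    (σ : ℝ)
    (hσ : σ = ‖Matrix.toEuclideanCLM (𝕜 := ℝ) (n := Fin n)
      (P - Matrix.of fun _ _ => (n : ℝ)⁻¹)‖)
    (hσlt : σ < 1)
    (h : ℝ) (hh : 0 < h)
    (xin : EuclideanSpace ℝ (Fin d)) (hxin : xin ∈ Khat)
    (x : Fin n → ℕ → EuclideanSpace ℝ (Fin d))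
    (hx1 : ∀ i, x i 1 = xin)
    (hxK : ∀ (i : Fin n), ∀ m ∈ Finset.Icc 1 B, x i m ∈ Khat)
    (ghat : Fin n → ℕ → EuclideanSpace ℝ (Fin d))
    (hghat : ∀ (i : Fin n), ∀ m ∈ Finset.Icc 1 B,
      ghat i m = ∑ t ∈ Finset.Icc ((m - 1) * K + 1) (m * K), f' t i (x i m))
    (z : Fin n → ℕ → EuclideanSpace ℝ (Fin d))
    (hz1 : ∀ i, z i 1 = 0)
    (hzrec : ∀ (i : Fin n), ∀ m ∈ Finset.Icc 1 B,
      z i (m + 1) = (∑ j, P i j • z j m) + ghat i m - (α * (K : ℝ)) • x i m)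
    (F : ℕ → Fin n → EuclideanSpace ℝ (Fin d) → ℝ)
    (hF : ∀ (m : ℕ) (i : Fin n) (y : EuclideanSpace ℝ (Fin d)),
      F m i y = ⟪z i m, y⟫ + ((m : ℝ) - 1) * α * K / 2 * ‖y‖ ^ 2 + h * ‖y - xin‖ ^ 2)
    (L : ℕ) (hL : 1 ≤ L)
    -- the update `x i (m+1) = CG(Khat, L, F m i, x i m)` with exact line search,
    -- where `∇F m i y = z i m + ((m−1)αK) • y + 2h • (y − xin)`
    (hCG : ∀ (i : Fin n), ∀ m ∈ Finset.Icc 1 (B - 1),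
      ∃ (cs vs : ℕ → EuclideanSpace ℝ (Fin d)) (ss : ℕ → ℝ),
        cs 0 = x i m ∧ cs L = x i (m + 1) ∧
        (∀ τ ≤ L, cs τ ∈ Khat) ∧
        (∀ τ < L, vs τ ∈ Khat) ∧
        (∀ τ < L, ss τ ∈ Set.Icc (0 : ℝ) 1) ∧
        (∀ τ < L, ∀ y ∈ Khat,
          ⟪z i m + (((m : ℝ) - 1) * α * K) • cs τ + (2 * h) • (cs τ - xin), vs τ⟫ ≤
          ⟪z i m + (((m : ℝ) - 1) * α * K) • cs τ + (2 * h) • (cs τ - xin), y⟫) ∧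
        (∀ τ < L, ∀ s' ∈ Set.Icc (0 : ℝ) 1,
          F m i (cs τ + ss τ • (vs τ - cs τ)) ≤ F m i (cs τ + s' • (vs τ - cs τ))) ∧
        (∀ τ < L, cs (τ + 1) = cs τ + ss τ • (vs τ - cs τ))) :
    ∀ (i : Fin n), ∀ xstar ∈ Khat,
      (∑ m ∈ Finset.Icc 1 B, ∑ t ∈ Finset.Icc ((m - 1) * K + 1) (m * K),
          ∑ j, f t j (x i m)) -
        (∑ t ∈ Finset.Icc 1 T, ∑ j, f t j xstar) ≤
      12 * n * G * R * T / Real.sqrt (L + 2) +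
      (∑ m ∈ Finset.Icc 2 B,
          3 * n * G * (K : ℝ) ^ 2 * (G + α * R) * Real.sqrt n /
            ((((m : ℝ) - 2) * α * K + 2 * h) * (1 - σ))) +
      (∑ m ∈ Finset.Icc 1 B,
          4 * n * (K : ℝ) ^ 2 * (G + 2 * α * R) ^ 2 / ((m : ℝ) * α * K + 2 * h)) +
      4 * n * h * R ^ 2 := by
  intro i xs hxs
  have hn0 : 0 < n := hn
  have hnR : (0 : ℝ) < n := by exact_mod_cast hn
  have hKR : (0 : ℝ) < K := by exact_mod_cast hK
  have hR : ∀ x ∈ Khat, ‖x‖ ≤ R := fun x hx => by simpa using hballout hx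
  have hR0 : 0 ≤ R := hr.le.trans hrR
  have hTpos : 1 ≤ T := by rw [hT]; exact Nat.mul_pos hB hK
  -- `G ≥ 0` because `Khat` contains two distinct points
  have hG : 0 ≤ G := by
    have he : ‖EuclideanSpace.single (⟨0, hd⟩ : Fin d) r‖ = r := by simp [abs_of_pos hr]
    have h1 := (abs_nonneg _).trans (hlip 1 (Finset.mem_Icc.2 ⟨le_rfl, hTpos⟩) i
      (EuclideanSpace.single (⟨0, hd⟩ : Fin d) r) (hballin (by simp [abs_of_pos hr]))
      0 (hballin (by simp [hr.le])))
    rw [sub_zero, he] at h1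
    exact nonneg_of_mul_nonneg_left h1 hr
  have hgrad : ∀ t ∈ Finset.Icc 1 T, ∀ j, ∀ w ∈ Khat, ‖f' t j w‖ ≤ G := fun t ht j w hw =>
    norm_gradient_le hKconv hr hballin hw (hdiff t j w) hG (hlip t ht j)
  let J : ℕ → Finset ℕ := fun m => Finset.Icc ((m - 1) * K + 1) (m * K)
  have hJcard : ∀ m ∈ Finset.Icc 1 B, (J m).card = K := by
    intro m hm
    obtain ⟨k, rfl⟩ : ∃ k, m = k + 1 := ⟨m - 1, by have := (Finset.mem_Icc.1 hm).1; omega⟩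
    simp only [J, Nat.card_Icc, Nat.add_sub_cancel, add_mul, one_mul]
    omega
  have hJT : ∀ m ∈ Finset.Icc 1 B, ∀ t ∈ J m, t ∈ Finset.Icc 1 T := by
    intro m hm t ht
    obtain ⟨h1, h2⟩ := Finset.mem_Icc.1 ht
    refine Finset.mem_Icc.2 ⟨by omega, h2.trans ?_⟩
    rw [hT]
    exact Nat.mul_le_mul_right _ (Finset.mem_Icc.1 hm).2
  set b : ℝ := α * K with hb
  have hb0 : 0 ≤ b := by positivity
  set C : ℝ := K * (G + α * R) with hC
  have hC0 : 0 ≤ C := by positivity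
  let D : Fin n → ℕ → EuclideanSpace ℝ (Fin d) := fun j m => ∑ t ∈ J m, f' t j (x j m) - b • x j m
  have hD : ∀ j, ∀ m ∈ Finset.Icc 1 B, ‖D j m‖ ≤ C := by
    intro j m hm
    have h1 : ‖∑ t ∈ J m, f' t j (x j m)‖ ≤ K * G := by
      refine (norm_sum_le_of_le _ fun t ht => hgrad t (hJT m hm t ht) j _ (hxK j m hm)).trans ?_
      simp [hJcard m hm]
    have h2 : ‖b • x j m‖ ≤ b * R := by
      rw [norm_smul, Real.norm_eq_abs, abs_of_nonneg hb0]
      exact mul_le_mul_of_nonneg_left (hR _ (hxK j m hm)) hb0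
    refine (norm_sub_le _ _).trans ((add_le_add h1 h2).trans_eq ?_)
    rw [hb, hC]; ring
  have hzD : ∀ j, ∀ m ∈ Finset.Icc 1 B, z j (m + 1) = (∑ k, P j k • z k m) + D j m := by
    intro j m hm
    rw [hzrec j m hm, hghat j m hm, add_sub_assoc]
  let zbar : ℕ → EuclideanSpace ℝ (Fin d) := fun m => (n : ℝ)⁻¹ • ∑ j, z j m
  let Dbar : ℕ → EuclideanSpace ℝ (Fin d) := fun m => (n : ℝ)⁻¹ • ∑ j, D j m
  have hzbar1 : zbar 1 = 0 := by simp [zbar, hz1]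
  have hzbar : ∀ m ∈ Finset.Icc 1 B, zbar (m + 1) = zbar m + Dbar m := by
    intro m hm
    simp only [zbar, Dbar]
    rw [← smul_add, Finset.sum_congr rfl fun j _ => hzD j m hm, Finset.sum_add_distrib,
      Finset.sum_comm]
    simp only [← Finset.sum_smul, hcol, one_smul]
  have hDbar : ∀ m ∈ Finset.Icc 1 B, ‖Dbar m‖ ≤ C := by
    intro m hm
    simp only [Dbar]
    rw [norm_smul, Real.norm_eq_abs, abs_of_pos (by positivity), inv_mul_le_iff₀ hnR]
    refine (norm_sum_le_of_le _ fun j _ => hD j m hm).trans ?_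
    simp
  have hexists : ∀ (w : EuclideanSpace ℝ (Fin d)) (a : ℝ), ∃ y ∈ Khat, ∀ u ∈ Khat,
      surrogate w xin a h y ≤ surrogate w xin a h u := fun w a =>
    hKcomp.exists_isMinOn ⟨xin, hxin⟩ (surrogate_continuous w xin a h).continuousOn
  choose y hyK hymin using fun m : ℕ => hexists (zbar m) (((m : ℝ) - 1) * b)
  have hy1 : y 1 = xin := by
    have h1 := hymin 1 xin hxin
    simp only [surrogate, hzbar1, inner_zero_left, Nat.cast_one, sub_self, zero_mul, zero_div,
      norm_zero, zero_add] at h1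
    have h2 : ‖y 1 - xin‖ ^ 2 ≤ 0 := by nlinarith
    have h3 : ‖y 1 - xin‖ = 0 := pow_eq_zero_iff two_ne_zero |>.1 (le_antisymm h2 (sq_nonneg _))
    exact sub_eq_zero.1 (norm_eq_zero.1 h3)
  -- bound on the distance of the plays in block `m` to the reference point `y (max 1 (m - 1))`
  let ε : ℕ → ℝ := fun m => 4 * R / √(L + 2) +
    if 2 ≤ m then C * √n / (1 - σ) / (((m : ℝ) - 2) * b + 2 * h) else 0
  have hdist : ∀ m ∈ Finset.Icc 1 B, ∀ j, ‖x j m - y (max 1 (m - 1))‖ ≤ ε m := by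
    intro m hm j
    obtain ⟨hm1, hm2⟩ := Finset.mem_Icc.1 hm
    rcases hm1.eq_or_lt with rfl | hm1
    · have : (0 : ℝ) ≤ 4 * R / √(L + 2) := by positivity
      simpa [hx1, hy1, ε] using this
    obtain ⟨k, rfl⟩ : ∃ k, m = k + 1 + 1 := ⟨m - 2, by omega⟩
    obtain ⟨cs, vs, ss, -, hcL, hcK, hvK, -, hlin, hline, hstep⟩ :=
      hCG j (k + 1) (Finset.mem_Icc.2 ⟨by omega, by omega⟩)
    have hF' : F (k + 1) j = surrogate (z j (k + 1)) xin ((((k + 1 : ℕ) : ℝ) - 1) * b) h := by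
      funext u
      rw [hF, surrogate, hb]; ring
    rw [hF'] at hline
    simp only [mul_assoc _ α (K : ℝ), ← hb] at hlin
    have hμ : 0 < (((k + 1 : ℕ) : ℝ) - 1) * b + 2 * h := by
      push_cast
      rw [add_sub_cancel_right]
      positivity
    obtain ⟨u, huK, hu⟩ := hexists (z j (k + 1)) ((((k + 1 : ℕ) : ℝ) - 1) * b)
    have h1 := cg_iterate_dist_le hKconv hμ hR0 hR hL hcK hvK hlin hline hstep huK hu
      (hyK (k + 1)) (hymin (k + 1))
    have h2 := consensus_bound hrow hcol hσ hσlt hz1 hzD hC0 hD j (k + 1)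
      (Finset.mem_Icc.2 ⟨by omega, by omega⟩)
    have h3 : (((k + 1 + 1 : ℕ) : ℝ) - 2) * b + 2 * h = (((k + 1 : ℕ) : ℝ) - 1) * b + 2 * h := by
      push_cast; ring
    have h4 : max 1 (k + 1 + 1 - 1) = k + 1 := by omega
    simp only [ε]
    rw [if_pos (by omega), h3, h4, ← hcL]
    exact h1.trans (add_le_add le_rfl (div_le_div_of_nonneg_right h2 hμ.le))
  have hftrl := delayed_leader_regret hKconv hR hb0 hh hC0 hxin hzbar1 hzbar hDbar hyK hymin hxs
  have hblock : ∀ m ∈ Finset.Icc 1 B, ∑ t ∈ J m, ∑ j, (f t j (x i m) - f t j xs) ≤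
      3 * n * G * K * ε m +
      n * ((⟪Dbar m, y (max 1 (m - 1))⟫ + b / 2 * ‖y (max 1 (m - 1))‖ ^ 2)
        - (⟪Dbar m, xs⟫ + b / 2 * ‖xs‖ ^ 2)) := fun m hm =>
    block_regret_le hα (hJcard m hm)
      (fun t ht j => hgrad t (hJT m hm t ht) j _ (hxK j m hm))
      (fun t ht j => hlip t (hJT m hm t ht) j) (fun j => hxK j m hm)
      (fun t ht j => hsc t (hJT m hm t ht) j _ (hxK j m hm) _ hxs) i hG (hdist m hm)
  have hxin2 : h * ‖xs - xin‖ ^ 2 ≤ 4 * h * R ^ 2 := by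
    have h1 : ‖xs - xin‖ ≤ 2 * R := (norm_sub_le _ _).trans (by linarith [hR _ hxs, hR _ hxin])
    have h2 := pow_le_pow_left₀ (norm_nonneg _) h1 2
    nlinarith
  have hε : ∑ m ∈ Finset.Icc 1 B, 3 * n * G * K * ε m = 12 * n * G * R * T / √(L + 2) +
      ∑ m ∈ Finset.Icc 2 B, 3 * n * G * (K : ℝ) ^ 2 * (G + α * R) * √n /
            ((((m : ℝ) - 2) * α * K + 2 * h) * (1 - σ)) := by
    have hfilter : (Finset.Icc 1 B).filter (fun m => 2 ≤ m) = Finset.Icc 2 B := by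
      ext m; simp only [Finset.mem_filter, Finset.mem_Icc]; omega
    simp only [ε, mul_add, Finset.sum_add_distrib]
    congr 1
    · rw [Finset.sum_const, Nat.card_Icc, Nat.add_sub_cancel, nsmul_eq_mul, hT]
      push_cast; ring
    · rw [← hfilter, Finset.sum_filter]
      refine Finset.sum_congr rfl fun m _ => ?_
      split_ifs
      · rw [hC, hb, div_div, mul_comm (1 - σ), ← mul_assoc _ α]
        ring
      · simp
  have hΛ : ∑ m ∈ Finset.Icc 1 B, 4 * n * (K : ℝ) ^ 2 * (G + 2 * α * R) ^ 2 /
        ((m : ℝ) * α * K + 2 * h) =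
      (n : ℝ) * ∑ m ∈ Finset.Icc 1 B, 4 * (C + b * R) ^ 2 / ((m : ℝ) * b + 2 * h) := by
    rw [Finset.mul_sum]
    refine Finset.sum_congr rfl fun m _ => ?_
    rw [hC, hb, ← mul_assoc _ α]
    ring
  have hcomp := sum_blocks B K fun t => ∑ j, f t j xs
  rw [hT, ← hcomp, ← hT, ← Finset.sum_sub_distrib]
  simp only [← Finset.sum_sub_distrib]
  refine (Finset.sum_le_sum hblock).trans ?_
  rw [Finset.sum_add_distrib, hε, hΛ, ← Finset.mul_sum]
  have h1 := mul_le_mul_of_nonneg_left hftrl hnR.le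
  have h2 := mul_le_mul_of_nonneg_left hxin2 hnR.le
  linarith
end
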